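/- arXiv:1903.00229 — 2 statements merged into one kernel-verified Lean document; each statement's English description precedes it below -/
import Mathlib

section
/- Suppose in addition that X is a Banach space, each G_n is convex, and X is θ-uniformly smooth for some θ > 1 (i.e., there is c > 0 with ρ_X(t) ≤ ct^θ for all t > 0). Then for every f ∈ X and n ∈ ℕ, K(f, 2^{-nα}; X, Y) ≤ C·(Σ_{k=n+1}^∞ 2^{-kαθ}‖P_{2^k}(f)‖_Y^θ)^{1/θ}, with C independent of f and n. -/
open scoped ENNReal

/-- The Peetre K-functional `K(f,t;X,Y) = inf{‖f−g‖_X + t‖g‖_Y : g ∈ Y}`. -/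
noncomputable def KFunctional {X : Type*} [SeminormedAddCommGroup X]
    (Y : Set X) (NY : X → ℝ) (f : X) (t : ℝ) : ℝ :=
  sInf {r : ℝ | ∃ g ∈ Y, r = ‖f - g‖ + t * NY g}

/-- The error of best approximation `E_n(f)_X = inf{‖f−g‖_X : g ∈ G_n}`. -/
noncomputable def bestApproxError {X : Type*} [SeminormedAddCommGroup X]
    (G : ℕ → Set X) (n : ℕ) (f : X) : ℝ :=
  sInf {r : ℝ | ∃ g ∈ G n, r = ‖f - g‖}

/-- The realization functional `R(f,n^{-α};X,G_n) = inf{‖f−g‖_X + n^{-α}‖g‖_Y : g ∈ G_n}`. -/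
noncomputable def realization {X : Type*} [SeminormedAddCommGroup X]
    (G : ℕ → Set X) (NY : X → ℝ) (α : ℝ) (n : ℕ) (f : X) : ℝ :=
  sInf {r : ℝ | ∃ g ∈ G n, r = ‖f - g‖ + (n : ℝ) ^ (-α) * NY g}

/-- The modulus of smoothness of the space `X`:
`ρ_X(t) = sup{(‖x+y‖ + ‖x−y‖)/2 − 1 : ‖x‖ = 1, ‖y‖ = t}`. -/
noncomputable def modulusSmoothness (X : Type*) [SeminormedAddCommGroup X] [NormedSpace ℝ X]
    (t : ℝ) : ℝ :=
  sSup {r : ℝ | ∃ x y : X, ‖x‖ = 1 ∧ ‖y‖ = t ∧ r = (‖x + y‖ + ‖x - y‖) / 2 - 1}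

/-!
For a convex set `S` and a best approximant `p` of `f` in `S`, a functional `F` of norm one which
separates `S` from the ball about `f` satisfies `F (f - p) = ‖f - p‖` and attains its maximum over
`S` at `p`. Testing `F` on dilates of `S` gives `‖f - p‖ + F p ≤ d_S f`, where `d_S` is the
asymptotic distance. On the other hand, for a smaller balanced set `S'` take near-best approximants
`g` of `p` in small dilates of `S'`: expanding `‖(f - p) + (p - g)‖ ^ θ` by uniform smoothness, the
first-order term tends to `θ ‖f - p‖ ^ (θ - 1) F p`. By Bernoulli's inequality this term and
`‖f - p‖ ^ θ` together are at most `(‖f - p‖ + F p) ^ θ`, so that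

  `d_{S'}(f) ^ θ ≤ d_S(f) ^ θ + C d_{S'}(p) ^ θ`.

Jackson's inequality bounds the last term, and telescoping along the sets `G (2 ^ k)` gives the
theorem. When `θ > 2`, uniform smoothness forces the dimension to be at most one and the inequality
is elementary.
-/

open Filter Metric Set
open scoped Pointwise Topology

lemma rpow_add_mul_le_rpow_add {θ A x : ℝ} (hθ : 1 ≤ θ) (hA : 0 < A) (hx : -A ≤ x) :
    A ^ θ + θ * A ^ (θ - 1) * x ≤ (A + x) ^ θ := by
  have bernoulli : 1 + θ * (x / A) ≤ (1 + x / A) ^ θ :=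
    one_add_mul_self_le_rpow_one_add (by rwa [le_div_iff₀ hA, neg_one_mul]) hθ
  have hAx : 0 ≤ 1 + x / A := by rw [one_add_div hA.ne']; exact div_nonneg (by linarith) hA.le
  calc A ^ θ + θ * A ^ (θ - 1) * x = A ^ θ * (1 + θ * (x / A)) := by
        rw [Real.rpow_sub_one hA.ne']; ring
    _ ≤ A ^ θ * (1 + x / A) ^ θ := by gcongr
    _ = (A + x) ^ θ := by
        rw [← Real.mul_rpow hA.le hAx, mul_add, mul_one, mul_div_cancel₀ _ hA.ne']

lemma rpow_one_add_le_add_abs_rpow {θ x : ℝ} (hθ : 1 < θ) (hθ2 : θ ≤ 2) (hx : -1 ≤ x) :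
    (1 + x) ^ θ ≤ 1 + θ * x + |x| ^ θ := by
  have rpow_eq {a : ℝ} (ha : 0 ≤ a) : a ^ θ = a * a ^ (θ - 1) := by
    simpa using Real.rpow_one_add' (y := θ - 1) ha (by linarith)
  have bernoulli : (1 + x) ^ (θ - 1) ≤ 1 + (θ - 1) * x :=
    rpow_one_add_le_one_add_mul_self hx (by linarith) (by linarith)
  rw [rpow_eq (by linarith), rpow_eq (abs_nonneg x)]
  rcases le_total 0 x with h | h
  · have subadd : (1 + x) ^ (θ - 1) ≤ 1 + x ^ (θ - 1) := by
      simpa using Real.rpow_add_le_add_rpow zero_le_one h (by linarith) (by linarith : θ - 1 ≤ 1)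
    rw [abs_of_nonneg h]
    nlinarith [mul_le_mul_of_nonneg_left subadd h]
  · have subadd : 1 ≤ (1 + x) ^ (θ - 1) + |x| ^ (θ - 1) := by
      have := Real.rpow_add_le_add_rpow (by linarith : 0 ≤ 1 + x) (abs_nonneg x)
        (by linarith : 0 ≤ θ - 1) (by linarith)
      rwa [abs_of_nonpos h, add_neg_cancel_right, Real.one_rpow, ← abs_of_nonpos h] at this
    rw [abs_of_nonpos h] at subadd ⊢
    nlinarith [mul_le_mul_of_nonpos_left subadd h]

lemma rpow_add_le_add_abs_rpow {θ A x : ℝ} (hθ : 1 < θ) (hθ2 : θ ≤ 2) (hA : 0 < A)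
    (hx : -A ≤ x) : (A + x) ^ θ ≤ A ^ θ + θ * A ^ (θ - 1) * x + |x| ^ θ := by
  have hxA : -1 ≤ x / A := by rwa [le_div_iff₀ hA, neg_one_mul]
  calc (A + x) ^ θ = A ^ θ * (1 + x / A) ^ θ := by
        rw [← Real.mul_rpow hA.le (by linarith), mul_add, mul_one, mul_div_cancel₀ _ hA.ne']
    _ ≤ A ^ θ * (1 + θ * (x / A) + |x / A| ^ θ) := by
        gcongr; exact rpow_one_add_le_add_abs_rpow hθ hθ2 hxA
    _ = A ^ θ + θ * A ^ (θ - 1) * x + |x| ^ θ := by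
        rw [abs_div, abs_of_pos hA, Real.div_rpow (abs_nonneg x) hA.le, Real.rpow_sub_one hA.ne']
        field_simp

lemma second_difference_nonpos_of_le_rpow {φ : ℝ → ℝ} {K θ : ℝ} (hθ : 2 < θ)
    (hφ : ∀ t s, 0 ≤ s → φ (t + s) + φ (t - s) - 2 * φ t ≤ K * s ^ θ) (t : ℝ) {s : ℝ}
    (hs : 0 ≤ s) : φ (t + s) + φ (t - s) - 2 * φ t ≤ 0 := by
  have halve {L : ℝ} (hL : ∀ t s, 0 ≤ s → φ (t + s) + φ (t - s) - 2 * φ t ≤ L * s ^ θ)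
      (t s : ℝ) (hs : 0 ≤ s) :
      φ (t + s) + φ (t - s) - 2 * φ t ≤ L * 2 ^ (2 - θ) * s ^ θ := by
    have right := hL (t + s / 2) (s / 2) (by positivity)
    have middle := hL t (s / 2) (by positivity)
    have left := hL (t - s / 2) (s / 2) (by positivity)
    rw [add_assoc, add_halves, add_sub_cancel_right] at right
    rw [sub_sub, add_halves, sub_add_cancel] at left
    have hscale : L * 2 ^ (2 - θ) * s ^ θ = 4 * (L * (s / 2) ^ θ) := by
      rw [Real.div_rpow hs two_pos.le, Real.rpow_sub two_pos, Real.rpow_two]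
      ring
    linarith
  have iterate (k : ℕ) : ∀ t s, 0 ≤ s →
      φ (t + s) + φ (t - s) - 2 * φ t ≤ K * ((2 : ℝ) ^ (2 - θ)) ^ k * s ^ θ := by
    induction k with
    | zero => simpa using hφ
    | succ k ih => simpa only [pow_succ, mul_assoc] using halve ih
  have hlim : Tendsto (fun k : ℕ ↦ K * ((2 : ℝ) ^ (2 - θ)) ^ k * s ^ θ) atTop (𝓝 0) := by
    have := tendsto_pow_atTop_nhds_zero_of_lt_one (r := (2 : ℝ) ^ (2 - θ)) (by positivity)
      (Real.rpow_lt_one_of_one_lt_of_neg one_lt_two (by linarith))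
    simpa using (this.const_mul K).mul_const (s ^ θ)
  exact ge_of_tendsto' hlim fun k ↦ iterate k t s hs

lemma ennreal_le_tsum_of_le_succ_add {a b : ℕ → ℝ≥0∞} (h : ∀ k, a k ≤ a (k + 1) + b k)
    (ha : Tendsto a atTop (𝓝 0)) : a 0 ≤ ∑' k, b k := by
  have telescope (n : ℕ) : a 0 ≤ a n + ∑ k ∈ Finset.range n, b k := by
    induction n with
    | zero => simp
    | succ n ih =>
      rw [Finset.sum_range_succ_comm, ← add_assoc]
      exact ih.trans (by gcongr; exact h n)
  have hlim : Tendsto (fun n ↦ a n + ∑' k, b k) atTop (𝓝 (∑' k, b k)) := by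
    simpa using ha.add_const (∑' k, b k)
  exact ge_of_tendsto' hlim fun n ↦ (telescope n).trans (by gcongr; exact ENNReal.sum_le_tsum _)

section UniformlySmooth

variable {X : Type*} [NormedAddCommGroup X] [NormedSpace ℝ X] {c θ : ℝ}

/-- `X` is `θ`-uniformly smooth with constant `c`: its modulus of smoothness satisfies
`ρ_X(t) ≤ c t^θ`. -/
def UniformlySmoothWith (X : Type*) [NormedAddCommGroup X] [NormedSpace ℝ X] (c θ : ℝ) : Prop :=
  ∀ t : ℝ, 0 < t → modulusSmoothness X t ≤ c * t ^ θ

lemma norm_add_add_norm_sub_le_modulusSmoothness {u : X} (hu : u ≠ 0) (y : X) :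
    ‖u + y‖ + ‖u - y‖ ≤ 2 * ‖u‖ * (1 + modulusSmoothness X (‖y‖ / ‖u‖)) := by
  have hu' : 0 < ‖u‖ := norm_pos_iff.2 hu
  have hbdd : BddAbove {r : ℝ | ∃ x z : X, ‖x‖ = 1 ∧ ‖z‖ = ‖y‖ / ‖u‖ ∧
      r = (‖x + z‖ + ‖x - z‖) / 2 - 1} := by
    refine ⟨‖y‖ / ‖u‖, ?_⟩
    rintro r ⟨x, z, hx, hz, rfl⟩
    linarith [norm_add_le x z, norm_sub_le x z]
  have hle : (‖‖u‖⁻¹ • u + ‖u‖⁻¹ • y‖ + ‖‖u‖⁻¹ • u - ‖u‖⁻¹ • y‖) / 2 - 1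
      ≤ modulusSmoothness X (‖y‖ / ‖u‖) := by
    refine le_csSup hbdd ⟨_, _, ?_, ?_, rfl⟩
    · rw [norm_smul, norm_inv, norm_norm, inv_mul_cancel₀ hu'.ne']
    · rw [norm_smul, norm_inv, norm_norm, div_eq_inv_mul]
  rw [← smul_add, ← smul_sub, norm_smul, norm_smul, norm_inv, norm_norm] at hle
  calc ‖u + y‖ + ‖u - y‖
      = 2 * ‖u‖ * (1 + ((‖u‖⁻¹ * ‖u + y‖ + ‖u‖⁻¹ * ‖u - y‖) / 2 - 1)) := by field_simp; ring
    _ ≤ 2 * ‖u‖ * (1 + modulusSmoothness X (‖y‖ / ‖u‖)) := by gcongr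

namespace UniformlySmoothWith

lemma norm_add_add_norm_sub_le (hX : UniformlySmoothWith X c θ) (hθ : θ ≠ 0) {u : X}
    (hu : u ≠ 0) (y : X) :
    ‖u + y‖ + ‖u - y‖ ≤ 2 * ‖u‖ + 2 * c * ‖u‖ ^ (1 - θ) * ‖y‖ ^ θ := by
  have hu' : 0 < ‖u‖ := norm_pos_iff.2 hu
  rcases eq_or_ne y 0 with rfl | hy
  · simp [Real.zero_rpow hθ, two_mul]
  calc ‖u + y‖ + ‖u - y‖ ≤ 2 * ‖u‖ * (1 + modulusSmoothness X (‖y‖ / ‖u‖)) :=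
        norm_add_add_norm_sub_le_modulusSmoothness hu y
    _ ≤ 2 * ‖u‖ * (1 + c * (‖y‖ / ‖u‖) ^ θ) := by
        gcongr; exact hX _ (by positivity)
    _ = 2 * ‖u‖ + 2 * c * ‖u‖ ^ (1 - θ) * ‖y‖ ^ θ := by
        rw [Real.div_rpow (norm_nonneg y) hu'.le, Real.rpow_sub hu', Real.rpow_one]
        ring

lemma norm_add_le_add_apply (hX : UniformlySmoothWith X c θ) (hθ : θ ≠ 0) {F : StrongDual ℝ X}
    (hF : ‖F‖ ≤ 1) {u : X} (hu : u ≠ 0) (hFu : F u = ‖u‖) (y : X) :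
    ‖u + y‖ ≤ ‖u‖ + F y + 2 * c * ‖u‖ ^ (1 - θ) * ‖y‖ ^ θ := by
  have hFsub : ‖u‖ - F y ≤ ‖u - y‖ := by
    simpa [hFu] using (le_abs_self _).trans (F.le_of_opNorm_le hF (u - y))
  linarith [hX.norm_add_add_norm_sub_le hθ hu y]

lemma norm_add_rpow_le (hX : UniformlySmoothWith X c θ) (hθ : 1 < θ) (hθ2 : θ ≤ 2)
    {F : StrongDual ℝ X} (hF : ‖F‖ ≤ 1) {u : X} (hu : u ≠ 0) (hFu : F u = ‖u‖) (y : X) :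
    ‖u + y‖ ^ θ ≤ ‖u‖ ^ θ + θ * ‖u‖ ^ (θ - 1) * F y + (1 + 2 * θ * c) * ‖y‖ ^ θ := by
  have hu' : 0 < ‖u‖ := norm_pos_iff.2 hu
  have hincr : |‖u + y‖ - ‖u‖| ≤ ‖y‖ := by simpa using abs_norm_sub_norm_le (u + y) u
  have hcancel : ‖u‖ ^ (θ - 1) * ‖u‖ ^ (1 - θ) = 1 := by
    rw [← Real.rpow_add hu', sub_add_sub_cancel, sub_self, Real.rpow_zero]
  calc ‖u + y‖ ^ θ = (‖u‖ + (‖u + y‖ - ‖u‖)) ^ θ := by rw [add_sub_cancel]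
    _ ≤ ‖u‖ ^ θ + θ * ‖u‖ ^ (θ - 1) * (‖u + y‖ - ‖u‖) + |‖u + y‖ - ‖u‖| ^ θ :=
        rpow_add_le_add_abs_rpow hθ hθ2 hu' (by linarith [norm_nonneg (u + y)])
    _ ≤ ‖u‖ ^ θ + θ * ‖u‖ ^ (θ - 1) * (F y + 2 * c * ‖u‖ ^ (1 - θ) * ‖y‖ ^ θ) + ‖y‖ ^ θ := by
        gcongr
        linarith [hX.norm_add_le_add_apply (by linarith) hF hu hFu y]
    _ = ‖u‖ ^ θ + θ * ‖u‖ ^ (θ - 1) * F y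
          + (1 + 2 * θ * c * (‖u‖ ^ (θ - 1) * ‖u‖ ^ (1 - θ))) * ‖y‖ ^ θ := by ring
    _ = ‖u‖ ^ θ + θ * ‖u‖ ^ (θ - 1) * F y + (1 + 2 * θ * c) * ‖y‖ ^ θ := by
        rw [hcancel, mul_one]

lemma norm_second_difference_le (hX : UniformlySmoothWith X c θ) (hc : 0 ≤ c) (hθ : 1 ≤ θ)
    {m : ℝ} (hm : 0 < m) {v : X} (hv : m ≤ ‖v‖) (w : X) :
    ‖v + w‖ + ‖v - w‖ - 2 * ‖v‖ ≤ 2 * c * m ^ (1 - θ) * ‖w‖ ^ θ := by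
  have hsmooth := hX.norm_add_add_norm_sub_le (by linarith) (norm_pos_iff.1 (hm.trans_le hv)) w
  calc ‖v + w‖ + ‖v - w‖ - 2 * ‖v‖ ≤ 2 * c * ‖v‖ ^ (1 - θ) * ‖w‖ ^ θ := by linarith
    _ ≤ 2 * c * m ^ (1 - θ) * ‖w‖ ^ θ := by
        have hpow : ‖v‖ ^ (1 - θ) ≤ m ^ (1 - θ) :=
          Real.rpow_le_rpow_of_nonpos hm hv (by linarith)
        gcongr

-- Off the span of `u` the norm stays away from `0` on the line `t ↦ y + t • u`, so smoothness of
-- order above `2` makes it midpoint concave there, whereas it tends to infinity at both ends.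
lemma mem_span_singleton_of_two_lt (hX : UniformlySmoothWith X c θ) (hc : 0 ≤ c) (hθ : 2 < θ)
    {u : X} (hu : u ≠ 0) (y : X) : y ∈ Submodule.span ℝ {u} := by
  by_contra hy
  set L := Submodule.span ℝ {u}
  set m := infDist y (L : Set X)
  have hm : 0 < m := (L.closed_of_finiteDimensional.notMem_iff_infDist_pos ⟨0, L.zero_mem⟩).1 hy
  have hlow (t : ℝ) : m ≤ ‖y + t • u‖ := by
    have hmem : -(t • u) ∈ L := L.neg_mem (L.smul_mem t (Submodule.mem_span_singleton_self u))
    simpa [dist_eq_norm] using infDist_le_dist_of_mem (x := y) (SetLike.mem_coe.2 hmem)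
  have hdiff (t s : ℝ) (hs : 0 ≤ s) : ‖y + (t + s) • u‖ + ‖y + (t - s) • u‖ - 2 * ‖y + t • u‖
      ≤ 2 * c * m ^ (1 - θ) * ‖u‖ ^ θ * s ^ θ := by
    have := hX.norm_second_difference_le hc (by linarith) hm (hlow t) (s • u)
    rw [norm_smul, Real.norm_of_nonneg hs, Real.mul_rpow hs (norm_nonneg u)] at this
    calc ‖y + (t + s) • u‖ + ‖y + (t - s) • u‖ - 2 * ‖y + t • u‖
        = ‖y + t • u + s • u‖ + ‖y + t • u - s • u‖ - 2 * ‖y + t • u‖ := by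
          rw [add_smul, sub_smul, ← add_assoc, ← add_sub_assoc]
      _ ≤ 2 * c * m ^ (1 - θ) * ‖u‖ ^ θ * s ^ θ := by linarith
  set s := (‖y‖ + 1) / ‖u‖
  have hconc := second_difference_nonpos_of_le_rpow (φ := fun t ↦ ‖y + t • u‖) hθ hdiff 0
    (s := s) (by positivity)
  have hgrow : 2 * (‖y‖ + 1) ≤ ‖y + s • u‖ + ‖y + (-s) • u‖ := by
    calc 2 * (‖y‖ + 1) = ‖(2 * s) • u‖ := by
          rw [norm_smul, Real.norm_of_nonneg (by positivity), mul_assoc,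
            div_mul_cancel₀ _ (norm_ne_zero_iff.2 hu)]
      _ = ‖(y + s • u) - (y + (-s) • u)‖ := by congr 1; module
      _ ≤ ‖y + s • u‖ + ‖y + (-s) • u‖ := norm_sub_le _ _
  simp only [zero_add, zero_sub, zero_smul, add_zero] at hconc
  linarith

lemma abs_apply_eq_norm_of_two_lt (hX : UniformlySmoothWith X c θ) (hc : 0 ≤ c) (hθ : 2 < θ)
    {F : StrongDual ℝ X} {u : X} (hu : u ≠ 0) (hFu : F u = ‖u‖) (y : X) : |F y| = ‖y‖ := by
  obtain ⟨a, rfl⟩ := Submodule.mem_span_singleton.1 (hX.mem_span_singleton_of_two_lt hc hθ hu y)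
  rw [map_smul, hFu, smul_eq_mul, abs_mul, abs_norm, norm_smul, Real.norm_eq_abs]

end UniformlySmoothWith

end UniformlySmooth

section AsymptoticDist

variable {X : Type*} [SeminormedAddCommGroup X] [NormedSpace ℝ X] {S : Set X} {f : X}

/-- The asymptotic distance from `f` to `S`: the supremum over `t > 0` of the distances to the
dilates `t • S`, a limit as `t → 0` when `S` is balanced. It replaces the best approximation error
because, unlike the latter, it is positively homogeneous in `f`. -/
noncomputable def asymptoticDist (S : Set X) (f : X) : ℝ :=
  ⨆ t : {t : ℝ // 0 < t}, infDist f (t.1 • S)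

lemma asymptoticDist_nonneg (S : Set X) (f : X) : 0 ≤ asymptoticDist S f :=
  Real.iSup_nonneg fun _ ↦ infDist_nonneg

lemma asymptoticDist_le {r : ℝ} (h : ∀ t : ℝ, 0 < t → infDist f (t • S) ≤ r) :
    asymptoticDist S f ≤ r :=
  ciSup_le fun t ↦ h t t.2

lemma asymptoticDist_rpow_le_of_infDist_smul_rpow_le {θ r : ℝ} (hθ : 0 < θ)
    (h : ∀ t : ℝ, 0 < t → infDist f (t • S) ^ θ ≤ r) : asymptoticDist S f ^ θ ≤ r := by
  have hr : 0 ≤ r := (Real.rpow_nonneg infDist_nonneg θ).trans (h 1 one_pos)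
  rw [← Real.le_rpow_inv_iff_of_pos (asymptoticDist_nonneg S f) hr hθ]
  exact asymptoticDist_le fun t ht ↦
    (Real.le_rpow_inv_iff_of_pos infDist_nonneg hr hθ).2 (h t ht)

lemma infDist_smul_le_norm (h0 : 0 ∈ S) (t : ℝ) (f : X) : infDist f (t • S) ≤ ‖f‖ := by
  simpa using infDist_le_dist_of_mem (x := f) (smul_mem_smul_set (a := t) h0)

lemma infDist_smul_le_asymptoticDist (h0 : 0 ∈ S) (f : X) {t : ℝ} (ht : 0 < t) :
    infDist f (t • S) ≤ asymptoticDist S f :=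
  le_ciSup (f := fun t : {t : ℝ // 0 < t} ↦ infDist f (t.1 • S))
    ⟨‖f‖, forall_mem_range.2 fun t ↦ infDist_smul_le_norm h0 t f⟩ ⟨t, ht⟩

lemma infDist_le_asymptoticDist (h0 : 0 ∈ S) (f : X) : infDist f S ≤ asymptoticDist S f := by
  simpa using infDist_smul_le_asymptoticDist h0 f one_pos

lemma asymptoticDist_le_norm (h0 : 0 ∈ S) (f : X) : asymptoticDist S f ≤ ‖f‖ :=
  asymptoticDist_le fun t _ ↦ infDist_smul_le_norm h0 t f

lemma asymptoticDist_le_add_dist (h0 : 0 ∈ S) (f g : X) :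
    asymptoticDist S f ≤ asymptoticDist S g + dist f g :=
  asymptoticDist_le fun t ht ↦ infDist_le_infDist_add_dist.trans <| by
    gcongr; exact infDist_smul_le_asymptoticDist h0 g ht

lemma asymptoticDist_le_of_infDist_smul_le {r : ℝ}
    (h : ∀ t : ℝ, 0 < t → infDist (t • f) S ≤ t * r) : asymptoticDist S f ≤ r := by
  refine asymptoticDist_le fun t ht ↦ ?_
  calc infDist f (t • S) = infDist (t • t⁻¹ • f) (t • S) := by rw [smul_inv_smul₀ ht.ne']
    _ = t * infDist (t⁻¹ • f) S := by
        rw [infDist_smul₀ ht.ne', Real.norm_of_nonneg ht.le]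
    _ ≤ t * (t⁻¹ * r) := by gcongr; exact h _ (inv_pos.2 ht)
    _ = r := mul_inv_cancel_left₀ ht.ne' r

lemma apply_le_asymptoticDist (h0 : 0 ∈ S) {F : StrongDual ℝ X} (hF : ‖F‖ ≤ 1) {K : ℝ}
    (hK : ∀ h ∈ S, F h ≤ K) (f : X) : F f ≤ asymptoticDist S f := by
  have hle {t : ℝ} (ht : 0 < t) : F f - t * K ≤ asymptoticDist S f := by
    refine le_trans ?_ (infDist_smul_le_asymptoticDist h0 f ht)
    refine (le_infDist ⟨_, smul_mem_smul_set h0⟩).2 ?_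
    rintro _ ⟨h, hh, rfl⟩
    calc F f - t * K ≤ F f - t * F h := by gcongr; exact hK h hh
      _ = F (f - t • h) := by rw [map_sub, map_smul, smul_eq_mul]
      _ ≤ 1 * ‖f - t • h‖ := (le_abs_self _).trans (F.le_of_opNorm_le hF _)
      _ = dist f (t • h) := by rw [one_mul, dist_eq_norm]
  have hlim : Tendsto (fun t : ℝ ↦ F f - t * K) (𝓝[>] 0) (𝓝 (F f)) := by
    have : Continuous fun t : ℝ ↦ F f - t * K := by fun_prop
    simpa using (this.tendsto 0).mono_left nhdsWithin_le_nhds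
  exact le_of_tendsto hlim (eventually_mem_nhdsWithin.mono fun t ht ↦ hle ht)

lemma exists_strongDual_le_of_norm_sub_eq_infDist (hS : Convex ℝ S) {p : X} (hp : p ∈ S)
    (hbest : ‖f - p‖ = infDist f S) (hfp : 0 < ‖f - p‖) :
    ∃ F : StrongDual ℝ X, ‖F‖ ≤ 1 ∧ F (f - p) = ‖f - p‖ ∧ ∀ h ∈ S, F h ≤ F p := by
  obtain ⟨Φ, u, hball, hu⟩ := geometric_hahn_banach_open (convex_ball f ‖f - p‖) isOpen_ball hS
    (hbest ▸ disjoint_ball_infDist)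
  have hclosedBall : ∀ x ∈ closedBall f ‖f - p‖, Φ x ≤ u := by
    rw [← closure_ball f hfp.ne']
    exact closure_minimal (fun x hx ↦ (hball x hx).le) (isClosed_Iic.preimage Φ.continuous)
  have hΦp : Φ p = u := by
    refine (hclosedBall p ?_).antisymm (hu p hp)
    rw [mem_closedBall', dist_eq_norm]
  have hgap : 0 < Φ (p - f) := by
    rw [map_sub, hΦp]
    exact sub_pos.2 (hball f (mem_ball_self hfp))
  have hunit {v : X} (hv : ‖v‖ = 1) : ‖f - p‖ / Φ (p - f) * Φ v ≤ 1 := by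
    have := hclosedBall (f + ‖f - p‖ • v) (by simp [norm_smul, hv])
    rw [div_mul_eq_mul_div, div_le_one hgap, map_sub, hΦp, le_sub_iff_add_le']
    simpa using this
  refine ⟨-((‖f - p‖ / Φ (p - f)) • Φ), ?_, ?_, fun h hh ↦ ?_⟩
  · refine ContinuousLinearMap.opNorm_le_of_unit_norm zero_le_one fun v hv ↦ ?_
    rw [neg_apply, norm_neg, Real.norm_eq_abs, abs_le']
    refine ⟨hunit hv, ?_⟩
    simpa using hunit (v := -v) (by rwa [norm_neg])
  · rw [neg_apply, ← map_neg, neg_sub]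
    exact div_mul_cancel₀ _ hgap.ne'
  · rw [neg_apply, neg_apply, neg_le_neg_iff]
    exact mul_le_mul_of_nonneg_left (hΦp.trans_le (hu h hh)) (by positivity)

end AsymptoticDist

namespace UniformlySmoothWith

variable {X : Type*} [NormedAddCommGroup X] [NormedSpace ℝ X] {c θ : ℝ} {S S' : Set X} {f p : X}

lemma infDist_smul_rpow_le (hX : UniformlySmoothWith X c θ) (hc : 0 ≤ c) (hθ : 1 < θ)
    (hθ2 : θ ≤ 2) {F : StrongDual ℝ X} (hF : ‖F‖ ≤ 1) (hfp : f - p ≠ 0)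
    (hFfp : F (f - p) = ‖f - p‖) (hbal : Balanced ℝ S) (h0 : 0 ∈ S) (hFS : ∀ h ∈ S, F h ≤ F p)
    {t : ℝ} (ht : 0 < t) :
    infDist f (t • S) ^ θ
      ≤ ‖f - p‖ ^ θ + θ * ‖f - p‖ ^ (θ - 1) * F p + (1 + 2 * θ * c) * asymptoticDist S p ^ θ := by
  have hbound {ε : ℝ} (hε : 0 < ε) (hεt : ε ≤ t) : infDist f (t • S) ^ θ
      ≤ ‖f - p‖ ^ θ + θ * ‖f - p‖ ^ (θ - 1) * (F p + ε * F p)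
        + (1 + 2 * θ * c) * (asymptoticDist S p + ε) ^ θ := by
    obtain ⟨_, ⟨h, hh, rfl⟩, hdist⟩ := (infDist_lt_iff ⟨_, smul_mem_smul_set h0⟩).1
      ((infDist_smul_le_asymptoticDist h0 p hε).trans_lt (lt_add_of_pos_right _ hε))
    have hmem : ε • h ∈ t • S :=
      hbal.smul_mono (by rwa [Real.norm_of_nonneg hε.le, Real.norm_of_nonneg ht.le])
        (smul_mem_smul_set hh)
    have hFh : -F h ≤ F p := by simpa using hFS (-h) (hbal.neg_mem_iff.2 hh)
    calc infDist f (t • S) ^ θ ≤ ‖(f - p) + (p - ε • h)‖ ^ θ := by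
          gcongr
          · exact infDist_nonneg
          · simpa [dist_eq_norm] using infDist_le_dist_of_mem (x := f) hmem
      _ ≤ ‖f - p‖ ^ θ + θ * ‖f - p‖ ^ (θ - 1) * F (p - ε • h)
            + (1 + 2 * θ * c) * ‖p - ε • h‖ ^ θ := hX.norm_add_rpow_le hθ hθ2 hF hfp hFfp _
      _ ≤ _ := by
          gcongr
          · rw [map_sub, map_smul, smul_eq_mul, sub_eq_add_neg, ← mul_neg]
            gcongr
          · rw [← dist_eq_norm]; exact hdist.le
  have hcont : Continuous fun ε : ℝ ↦ ‖f - p‖ ^ θ + θ * ‖f - p‖ ^ (θ - 1) * (F p + ε * F p)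
      + (1 + 2 * θ * c) * (asymptoticDist S p + ε) ^ θ := by
    have := (continuous_const.add continuous_id : Continuous fun ε ↦ asymptoticDist S p + ε)
    have := this.rpow_const fun _ ↦ Or.inr (by linarith : 0 ≤ θ)
    fun_prop
  have hlim := (hcont.tendsto 0).mono_left (nhdsWithin_le_nhds (s := Ioi 0))
  simp only [zero_mul, add_zero] at hlim
  exact ge_of_tendsto hlim <| Filter.mem_of_superset (Ioc_mem_nhdsGT ht) fun ε hε ↦ hbound hε.1 hε.2

lemma asymptoticDist_rpow_le (hX : UniformlySmoothWith X c θ) (hc : 0 ≤ c) (hθ : 1 < θ)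
    (hS : Convex ℝ S) (hS' : Balanced ℝ S') (h0 : 0 ∈ S') (hsub : S' ⊆ S) (hp : p ∈ S)
    (hnp : -p ∈ S) (hbest : ‖f - p‖ = infDist f S) :
    asymptoticDist S' f ^ θ
      ≤ asymptoticDist S f ^ θ + (1 + 2 * θ * c) * asymptoticDist S' p ^ θ := by
  have hnonneg : 0 ≤ asymptoticDist S f ^ θ := Real.rpow_nonneg (asymptoticDist_nonneg S f) θ
  have hnonneg' : 0 ≤ asymptoticDist S' p ^ θ := Real.rpow_nonneg (asymptoticDist_nonneg S' p) θ
  rcases eq_or_ne f p with rfl | hne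
  · nlinarith [mul_nonneg (by positivity : 0 ≤ 2 * θ * c) hnonneg']
  have hfp : f - p ≠ 0 := sub_ne_zero.2 hne
  obtain ⟨F, hF, hFfp, hFS⟩ :=
    exists_strongDual_le_of_norm_sub_eq_infDist hS hp hbest (norm_pos_iff.2 hfp)
  have hFp : 0 ≤ F p := by linarith [hFS (-p) hnp, map_neg F p]
  have hFf : F f = ‖f - p‖ + F p := by rw [← hFfp, map_sub, sub_add_cancel]
  have hlower : F f ≤ asymptoticDist S f := apply_le_asymptoticDist (hsub h0) hF hFS f
  have hFf0 : 0 ≤ F f := by rw [hFf]; positivity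
  rcases le_or_gt θ 2 with hθ2 | hθ2
  · have hupper : asymptoticDist S' f ^ θ ≤ ‖f - p‖ ^ θ + θ * ‖f - p‖ ^ (θ - 1) * F p
        + (1 + 2 * θ * c) * asymptoticDist S' p ^ θ :=
      asymptoticDist_rpow_le_of_infDist_smul_rpow_le (by linarith) fun t ht ↦
        hX.infDist_smul_rpow_le hc hθ hθ2 hF hfp hFfp hS' h0 (fun h hh ↦ hFS h (hsub hh)) ht
    calc asymptoticDist S' f ^ θ ≤ _ := hupper
      _ ≤ F f ^ θ + (1 + 2 * θ * c) * asymptoticDist S' p ^ θ := by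
          rw [hFf]
          gcongr
          exact rpow_add_mul_le_rpow_add hθ.le (norm_pos_iff.2 hfp)
            (by linarith [norm_nonneg (f - p)])
      _ ≤ _ := by gcongr
  · have hnorm : asymptoticDist S' f ≤ asymptoticDist S f := by
      calc asymptoticDist S' f ≤ ‖f‖ := asymptoticDist_le_norm h0 f
        _ = F f := by rw [← hX.abs_apply_eq_norm_of_two_lt hc hθ2 hfp hFfp, abs_of_nonneg hFf0]
        _ ≤ asymptoticDist S f := hlower
    calc asymptoticDist S' f ^ θ ≤ asymptoticDist S f ^ θ := by
          gcongr; exact asymptoticDist_nonneg S' f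
      _ ≤ _ := le_add_of_nonneg_right (by positivity)

end UniformlySmoothWith

section Jackson

variable {X : Type*} [SeminormedAddCommGroup X]

lemma bestApproxError_eq_infDist (G : ℕ → Set X) (n : ℕ) (f : X) :
    bestApproxError G n f = infDist f (G n) := by
  rw [infDist_eq_iInf, ← sInf_image', bestApproxError]
  congr 1
  ext r
  simp only [mem_ofPred_eq, mem_image, dist_eq_norm, eq_comm]

lemma kFunctional_le {Y : Set X} {N : X → ℝ} (hN : ∀ g ∈ Y, 0 ≤ N g) (f : X) {t : ℝ}
    (ht : 0 ≤ t) {g : X} (hg : g ∈ Y) : KFunctional Y N f t ≤ ‖f - g‖ + t * N g := by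
  refine csInf_le ⟨0, ?_⟩ ⟨g, hg, rfl⟩
  rintro _ ⟨h, hh, rfl⟩
  have := hN h hh
  positivity

variable [NormedSpace ℝ X]

lemma kFunctional_le_asymptoticDist_add {Y S S' : Set X} {N : X → ℝ} (hN : ∀ g ∈ Y, 0 ≤ N g)
    {t : ℝ} (ht : 0 ≤ t) (h0 : 0 ∈ S) (hsub : S ⊆ S') {f p : X} (hp : p ∈ Y)
    (hbest : ‖f - p‖ = infDist f S') : KFunctional Y N f t ≤ asymptoticDist S f + t * N p := by
  calc KFunctional Y N f t ≤ infDist f S' + t * N p := hbest ▸ kFunctional_le hN f ht hp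
    _ ≤ infDist f S + t * N p := by
        gcongr; exact infDist_le_infDist_of_subset hsub ⟨0, h0⟩
    _ ≤ asymptoticDist S f + t * N p := by gcongr; exact infDist_le_asymptoticDist h0 f

variable {Y : Submodule ℝ X} {N : X → ℝ}

lemma asymptoticDist_le_of_jackson {S : Set X} {J : ℝ}
    (hN_smul : ∀ (a : ℝ), ∀ g ∈ Y, N (a • g) = |a| * N g)
    (jackson : ∀ g ∈ Y, infDist g S ≤ J * N g) {g : X} (hg : g ∈ Y) :
    asymptoticDist S g ≤ J * N g :=
  asymptoticDist_le_of_infDist_smul_le fun t ht ↦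
    calc infDist (t • g) S ≤ J * N (t • g) := jackson _ (Y.smul_mem t hg)
      _ = t * (J * N g) := by rw [hN_smul t g hg, abs_of_pos ht, mul_left_comm]

lemma tendsto_asymptoticDist_zero {D : Set X} (hD : Dense D) {S : ℕ → Set X}
    (h0 : ∀ k, 0 ∈ S k) {ε : ℕ → ℝ} (hε : Tendsto ε atTop (𝓝 0))
    (hle : ∀ g ∈ D, ∀ k, asymptoticDist (S k) g ≤ ε k * N g) (f : X) :
    Tendsto (fun k ↦ asymptoticDist (S k) f) atTop (𝓝 0) := by
  refine Metric.tendsto_atTop.2 fun δ hδ ↦ ?_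
  obtain ⟨g, hg, hfg⟩ := hD.exists_dist_lt f (half_pos hδ)
  have hlim : Tendsto (fun k ↦ ε k * N g) atTop (𝓝 0) := by simpa using hε.mul_const (N g)
  obtain ⟨k₀, hk₀⟩ := eventually_atTop.1 (hlim.eventually_lt_const (half_pos hδ))
  refine ⟨k₀, fun k hk ↦ ?_⟩
  rw [Real.dist_0_eq_abs, abs_of_nonneg (asymptoticDist_nonneg (S k) f)]
  linarith [asymptoticDist_le_add_dist (h0 k) f g, hle g hg k, hk₀ k hk]

end Jackson

section Telescoping

variable {X : Type*} [NormedAddCommGroup X] [NormedSpace ℝ X] {c θ : ℝ} {S : ℕ → Set X}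
  {p : ℕ → X} {f : X}

lemma UniformlySmoothWith.ofReal_asymptoticDist_rpow_le_tsum (hX : UniformlySmoothWith X c θ)
    (hc : 0 ≤ c) (hθ : 1 < θ) (hmono : ∀ k, S k ⊆ S (k + 1)) (hconv : ∀ k, Convex ℝ (S k))
    (hbal : ∀ k, Balanced ℝ (S k)) (h0 : ∀ k, 0 ∈ S k) (hp : ∀ k, p k ∈ S k)
    (hbest : ∀ k, ‖f - p k‖ = infDist f (S k))
    (hlim : Tendsto (fun k ↦ asymptoticDist (S k) f) atTop (𝓝 0)) (n : ℕ) :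
    ENNReal.ofReal (asymptoticDist (S n) f) ^ θ
      ≤ ENNReal.ofReal (1 + 2 * θ * c) *
        ∑' k, ENNReal.ofReal (asymptoticDist (S (n + k)) (p (n + k + 1))) ^ θ := by
  have hθ0 : 0 < θ := by linarith
  rw [← ENNReal.tsum_mul_left]
  refine ennreal_le_tsum_of_le_succ_add
    (a := fun k ↦ ENNReal.ofReal (asymptoticDist (S (n + k)) f) ^ θ) (fun k ↦ ?_) ?_
  · have hstep := hX.asymptoticDist_rpow_le hc hθ (hconv (n + k + 1)) (hbal (n + k)) (h0 _)
      (hmono _) (hp _) ((hbal _).neg_mem_iff.2 (hp _)) (hbest _)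
    simp only [ENNReal.ofReal_rpow_of_nonneg (asymptoticDist_nonneg _ _) hθ0.le]
    rw [← ENNReal.ofReal_mul (by positivity), ← ENNReal.ofReal_add]
    · exact ENNReal.ofReal_le_ofReal hstep
    all_goals have := asymptoticDist_nonneg (S (n + k)) (p (n + k + 1))
    · exact Real.rpow_nonneg (asymptoticDist_nonneg _ _) θ
    · positivity
  · have hlim' := ENNReal.tendsto_ofReal (hlim.comp (tendsto_add_atTop_nat n))
    simpa [Function.comp_def, add_comm n, hθ0] using
      ((ENNReal.continuous_rpow_const (y := θ)).tendsto _).comp hlim'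

end Telescoping

section LpTail

variable {θ : ℝ} {a : ℕ → ℝ}

/-- The `ℓ^θ` tail `(∑_{k > n} a_k^θ)^{1/θ}` of a nonnegative sequence, with values in `[0, ∞]` so
that divergent series need no convention. -/
noncomputable def lpTail (θ : ℝ) (a : ℕ → ℝ) (n : ℕ) : ℝ≥0∞ :=
  (∑' k : ℕ, ENNReal.ofReal (a (n + 1 + k) ^ θ)) ^ (1 / θ)

lemma ofReal_succ_le_lpTail (hθ : 0 < θ) (ha : ∀ k, 0 ≤ a k) (n : ℕ) :
    ENNReal.ofReal (a (n + 1)) ≤ lpTail θ a n := by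
  rw [lpTail, one_div, ENNReal.le_rpow_inv_iff hθ, ENNReal.ofReal_rpow_of_nonneg (ha _) hθ.le]
  exact ENNReal.le_tsum (f := fun k ↦ ENNReal.ofReal (a (n + 1 + k) ^ θ)) 0

lemma ennreal_le_ofReal_mul_lpTail (hθ : 0 < θ) (ha : ∀ k, 0 ≤ a k) {n : ℕ} {d : ℝ≥0∞}
    {D b : ℝ} (hD : 0 ≤ D) (hb : 0 ≤ b) {e : ℕ → ℝ} (he : ∀ k, e k ≤ b * a (n + 1 + k))
    (hd : d ^ θ ≤ ENNReal.ofReal D * ∑' k, ENNReal.ofReal (e k) ^ θ) :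
    d ≤ ENNReal.ofReal (D ^ (1 / θ) * b) * lpTail θ a n := by
  have hterm (k : ℕ) : ENNReal.ofReal (e k) ^ θ
      ≤ ENNReal.ofReal b ^ θ * ENNReal.ofReal (a (n + 1 + k) ^ θ) := by
    rw [← ENNReal.ofReal_rpow_of_nonneg (ha _) hθ.le, ← ENNReal.mul_rpow_of_nonneg _ _ hθ.le,
      ← ENNReal.ofReal_mul hb]
    gcongr
    exact he k
  have hpow : (ENNReal.ofReal (D ^ (1 / θ) * b) * lpTail θ a n) ^ θ
      = ENNReal.ofReal D * (ENNReal.ofReal b ^ θ * ∑' k, ENNReal.ofReal (a (n + 1 + k) ^ θ)) := by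
    rw [ENNReal.ofReal_mul (by positivity), ← ENNReal.ofReal_rpow_of_nonneg hD (by positivity),
      lpTail, one_div]
    simp only [ENNReal.mul_rpow_of_nonneg _ _ hθ.le, ENNReal.rpow_inv_rpow hθ.ne', mul_assoc]
  rw [← ENNReal.rpow_le_rpow_iff hθ, hpow, ← ENNReal.tsum_mul_left (a := ENNReal.ofReal b ^ θ)]
  refine hd.trans ?_
  gcongr with k
  exact hterm k

end LpTail

section KFunctional

variable {X : Type*} [NormedAddCommGroup X] [NormedSpace ℝ X] {Y : Submodule ℝ X} {N : X → ℝ}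
  {c θ τ c₁ : ℝ} {S : ℕ → Set X} {p : ℕ → X} {f : X}

lemma UniformlySmoothWith.ofReal_kFunctional_le_lpTail (hX : UniformlySmoothWith X c θ)
    (hc : 0 ≤ c) (hθ : 1 < θ) (hN : ∀ g ∈ Y, 0 ≤ N g)
    (hN_smul : ∀ (a : ℝ), ∀ g ∈ Y, N (a • g) = |a| * N g) (hY : Dense (Y : Set X))
    (hmono : ∀ k, S k ⊆ S (k + 1)) (hconv : ∀ k, Convex ℝ (S k))
    (hbal : ∀ k, Balanced ℝ (S k)) (h0 : ∀ k, 0 ∈ S k) (hSY : ∀ k, S k ⊆ Y) (hτ : 0 < τ)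
    (hτ1 : τ < 1) (hc₁ : 0 ≤ c₁) (jackson : ∀ g ∈ Y, ∀ k, infDist g (S k) ≤ c₁ * τ ^ k * N g)
    (hp : ∀ k, p k ∈ S k) (hbest : ∀ k, ‖f - p k‖ = infDist f (S k)) (n : ℕ) :
    ENNReal.ofReal (KFunctional Y N f (τ ^ n))
      ≤ ENNReal.ofReal (((1 + 2 * θ * c) ^ (1 / θ) * c₁ + 1) * τ⁻¹) *
        lpTail θ (fun k ↦ τ ^ k * N (p k)) n := by
  have hNp (k : ℕ) : 0 ≤ τ ^ k * N (p k) := mul_nonneg (by positivity) (hN _ (hSY k (hp k)))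
  have hdist (k : ℕ) {g : X} (hg : g ∈ Y) : asymptoticDist (S k) g ≤ c₁ * τ ^ k * N g :=
    asymptoticDist_le_of_jackson hN_smul (fun g hg ↦ jackson g hg k) hg
  have hlim : Tendsto (fun k ↦ asymptoticDist (S k) f) atTop (𝓝 0) := by
    refine tendsto_asymptoticDist_zero hY h0 (ε := fun k ↦ c₁ * τ ^ k) ?_
      (fun g hg k ↦ hdist k hg) f
    simpa using (tendsto_pow_atTop_nhds_zero_of_lt_one hτ.le hτ1).const_mul c₁
  have hweight (k : ℕ) : asymptoticDist (S (n + k)) (p (n + k + 1))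
      ≤ c₁ * τ⁻¹ * (τ ^ (n + 1 + k) * N (p (n + 1 + k))) := by
    rw [add_right_comm n 1 k]
    exact (hdist _ (hSY _ (hp _))).trans_eq (by field_simp; ring)
  have happrox := ennreal_le_ofReal_mul_lpTail (b := c₁ * τ⁻¹) (by linarith) hNp (by positivity)
    (by positivity) hweight
    (hX.ofReal_asymptoticDist_rpow_le_tsum hc hθ hmono hconv hbal h0 hp hbest hlim n)
  have hsplit : KFunctional Y N f (τ ^ n)
      ≤ asymptoticDist (S n) f + τ⁻¹ * (τ ^ (n + 1) * N (p (n + 1))) :=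
    (kFunctional_le_asymptoticDist_add hN (by positivity) (h0 n) (hmono n) (hSY _ (hp _))
      (hbest _)).trans_eq (by field_simp; ring)
  refine (ENNReal.ofReal_le_ofReal hsplit).trans ?_
  rw [ENNReal.ofReal_add (asymptoticDist_nonneg _ _) (mul_nonneg (by positivity) (hNp _)),
    ENNReal.ofReal_mul (by positivity : 0 ≤ τ⁻¹), add_mul, one_mul, mul_assoc _ c₁,
    ENNReal.ofReal_add (by positivity) (by positivity), add_mul]
  gcongr
  exact ofReal_succ_le_lpTail (by linarith) hNp n

end KFunctional

theorem stmt7_general {X : Type*} [NormedAddCommGroup X] [NormedSpace ℝ X]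
    (Y : Submodule ℝ X) (NY : X → ℝ)
    (hNY_nonneg : ∀ g ∈ Y, 0 ≤ NY g)
    (hNY_smul : ∀ (c : ℝ), ∀ g ∈ Y, NY (c • g) = |c| * NY g)
    (hY_dense : Dense (Y : Set X))
    (G : ℕ → Set X)
    (hG_zero : (0 : X) ∈ G 1)
    (hG_mono : ∀ n : ℕ, G n ⊆ G (n + 1))
    (hG_neg : ∀ (n : ℕ) (g : X), g ∈ G n → -g ∈ G n)
    (hG_sub : ∀ n : ℕ, G n ⊆ (Y : Set X))
    (hG_conv : ∀ n : ℕ, Convex ℝ (G n))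
    (α : ℝ) (hα : 0 < α) (c₁ : ℝ) (hc₁ : 0 ≤ c₁)
    (jackson : ∀ f ∈ Y, ∀ n : ℕ, 1 ≤ n →
      bestApproxError G n f ≤ c₁ * (n : ℝ) ^ (-α) * NY f)
    (P : ℕ → X → X)
    (hP : ∀ (f : X) (n : ℕ), 1 ≤ n → P n f ∈ G n ∧ ‖f - P n f‖ = bestApproxError G n f)
    (θ : ℝ) (hθ : 1 < θ) (cX : ℝ) (hcX : 0 ≤ cX) (hX : UniformlySmoothWith X cX θ) :
    ∃ C : ℝ, 0 < C ∧ ∀ (f : X) (n : ℕ),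
      ENNReal.ofReal (KFunctional (Y : Set X) NY f ((2 : ℝ) ^ (-(n : ℝ) * α)))
        ≤ ENNReal.ofReal C *
          lpTail θ (fun k ↦ (2 : ℝ) ^ (-(k : ℝ) * α) * NY (P (2 ^ k) f)) n := by
  simp only [bestApproxError_eq_infDist] at jackson hP
  have hmono : Monotone G := monotone_nat_of_le_succ hG_mono
  have htwo (k : ℕ) : 1 ≤ 2 ^ k := Nat.one_le_two_pow
  have hτ (k : ℕ) : (2 : ℝ) ^ (-(k : ℝ) * α) = ((2 : ℝ) ^ (-α)) ^ k := by
    rw [← Real.rpow_mul_natCast two_pos.le]; ring_nf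
  have hτ' (k : ℕ) : ((2 ^ k : ℕ) : ℝ) ^ (-α) = ((2 : ℝ) ^ (-α)) ^ k := by
    rw [Nat.cast_pow, Nat.cast_ofNat, Real.rpow_pow_comm two_pos.le]
  simp only [hτ]
  refine ⟨((1 + 2 * θ * cX) ^ (1 / θ) * c₁ + 1) * (2 ^ (-α))⁻¹, by positivity, fun f n ↦ ?_⟩
  exact hX.ofReal_kFunctional_le_lpTail (S := fun k ↦ G (2 ^ k)) (p := fun k ↦ P (2 ^ k) f)
    hcX hθ hNY_nonneg hNY_smul hY_dense (fun k ↦ hmono (Nat.pow_le_pow_right two_pos k.le_succ))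
    (fun k ↦ hG_conv _) (fun k ↦ (balanced_iff_neg_mem (hG_conv _)).2 (hG_neg _))
    (fun k ↦ hmono (htwo k) hG_zero) (fun k ↦ hG_sub _) (by positivity)
    (Real.rpow_lt_one_of_one_lt_of_neg one_lt_two (neg_neg_of_pos hα)) hc₁
    (fun g hg k ↦ by simpa only [hτ'] using jackson g hg (2 ^ k) (htwo k))
    (fun k ↦ (hP f _ (htwo k)).1) (fun k ↦ (hP f _ (htwo k)).2) n

/-- Theorem (B). If `X` is a Banach space which is `θ`-uniformly smooth,
each `G_n` is convex, and the Jackson, Bernstein and realization assumptions hold, then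
`K(f, 2^{-nα}; X, Y) ≲ (∑_{k=n+1}^∞ 2^{-kαθ} ‖P_{2^k}(f)‖_Y^θ)^{1/θ}`. -/
theorem stmt7 {X : Type*} [NormedAddCommGroup X] [NormedSpace ℝ X] [CompleteSpace X]
    (Y : Submodule ℝ X) (NY : X → ℝ)
    (hNY_nonneg : ∀ g : X, 0 ≤ NY g)
    (hNY_add : ∀ g h : X, g ∈ Y → h ∈ Y → NY (g + h) ≤ NY g + NY h)
    (hNY_smul : ∀ (c : ℝ) (g : X), g ∈ Y → NY (c • g) = |c| * NY g)
    (G : ℕ → Set X)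
    (hG_zero : (0 : X) ∈ G 1)
    (hG_mono : ∀ n : ℕ, G n ⊆ G (n + 1))
    (hG_neg : ∀ (n : ℕ) (g : X), g ∈ G n → -g ∈ G n)
    (hG_sub : ∀ n : ℕ, G n ⊆ (Y : Set X))
    (hG_dense : Dense (⋃ n : ℕ, G (n + 1)))
    (α : ℝ) (hα : 0 < α)
    (c₁ c₂ : ℝ) (hc₁ : 0 < c₁) (hc₂ : 0 < c₂)
    (jackson : ∀ f ∈ Y, ∀ n : ℕ, 1 ≤ n →
      bestApproxError G n f ≤ c₁ * (n : ℝ) ^ (-α) * NY f)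
    (bernstein : ∀ n : ℕ, 1 ≤ n → ∀ g₁ ∈ G n, ∀ g₂ ∈ G n,
      NY (g₁ - g₂) ≤ c₂ * (n : ℝ) ^ α * ‖g₁ - g₂‖)
    (C₀ : ℝ) (hC₀ : 0 < C₀)
    (hreal : ∀ (f : X) (n : ℕ), 1 ≤ n →
      realization G NY α n f ≤ C₀ * KFunctional (Y : Set X) NY f ((n : ℝ) ^ (-α)))
    (P : ℕ → X → X)
    (hP : ∀ (f : X) (n : ℕ), 1 ≤ n → P n f ∈ G n ∧ ‖f - P n f‖ = bestApproxError G n f)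
    (hG_conv : ∀ n : ℕ, Convex ℝ (G n))
    (θ : ℝ) (hθ : 1 < θ)
    (cX : ℝ) (hcX : 0 < cX)
    (hsmooth : ∀ t : ℝ, 0 < t → modulusSmoothness X t ≤ cX * t ^ θ) :
    ∃ C : ℝ, 0 < C ∧ ∀ (f : X) (n : ℕ), 1 ≤ n →
      ENNReal.ofReal (KFunctional (Y : Set X) NY f ((2 : ℝ) ^ (-(n : ℝ) * α)))
        ≤ ENNReal.ofReal C *
          (∑' k : ℕ,
            ENNReal.ofReal
              (((2 : ℝ) ^ (-((n + 1 + k : ℕ) : ℝ) * α) * NY (P (2 ^ (n + 1 + k)) f)) ^ θ)) ^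
            (1 / θ) := by
  obtain ⟨C, hC, hle⟩ := stmt7_general Y NY (fun g _ ↦ hNY_nonneg g) hNY_smul
    (hG_dense.mono (iUnion_subset fun n ↦ hG_sub (n + 1))) G hG_zero hG_mono hG_neg hG_sub hG_conv
    α hα c₁ hc₁.le jackson P hP θ hθ cX hcX.le hsmooth
  exact ⟨C, hC, fun f n _ ↦ hle f n⟩
end

section
/- Let X = L_p(μ) for a measure space (S, μ) with 1 < p < ∞, suppose each G_n is convex, and set τ = max(2,p) and θ = min(2,p). Then for every f ∈ L_p and n ∈ ℕ, (Σ_{k=n+1}^∞ 2^{-kατ}‖P_{2^k}(f)‖_Y^τ)^{1/τ} ≤ C·K(f, 2^{-nα}; L_p, Y) and K(f, 2^{-nα}; L_p, Y) ≤ C·(Σ_{k=n+1}^∞ 2^{-kαθ}‖P_{2^k}(f)‖_Y^θ)^{1/θ}, with C independent of f and n. -/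
open scoped ENNReal
open MeasureTheory

/-!
The space `L_p` is uniformly convex of power type `max 2 p` and uniformly smooth of power type
`min 2 p`, by two-point inequalities for real numbers that integrate to inequalities for norms.
Write `x k` for the best approximant of `f` from `G (2 ^ k)`.

Upper bound: uniform convexity gives a Pythagorean inequality for best approximants from nested
convex sets, so the `τ`-th powers of the increments `x (k + 1) - x k` are summable. By the
Bernstein inequality the sequence `2 ^ (-kα) ‖x k‖_Y` satisfies a contractive recursion driven by
these increments, and a discrete Hardy inequality bounds its `ℓ^τ` norm.

Lower bound: as the Jackson inequality is homogeneous, `x (k + 1)` is within a multiple of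
`2 ^ (-kα) ‖x (k + 1)‖_Y` of a point `z k` of the lineality space of `G (2 ^ k)`. Translations along
the lineality space preserve `G (2 ^ (k + 1))`, so uniform smoothness and the optimality of
`x (k + 1)` give `‖f - z k‖ ^ θ ≤ ‖f - z (k + 1)‖ ^ θ + C ‖x (k + 1) - z k‖ ^ θ`, which telescopes.
-/

section TwoPointInequalities

lemma rpow_add_div_two_le {s a b : ℝ} (hs : 1 ≤ s) (ha : 0 ≤ a) (hb : 0 ≤ b) :
    ((a + b) / 2) ^ s ≤ (a ^ s + b ^ s) / 2 := by
  have h := (convexOn_rpow hs).2 (Set.mem_Ici.2 ha) (Set.mem_Ici.2 hb)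
    (half_pos one_pos).le (half_pos one_pos).le (add_halves 1)
  simp only [smul_eq_mul] at h
  ring_nf at h ⊢
  exact h

lemma add_rpow_div_two_le {s a b : ℝ} (hs0 : 0 ≤ s) (hs1 : s ≤ 1) (ha : 0 ≤ a) (hb : 0 ≤ b) :
    (a ^ s + b ^ s) / 2 ≤ ((a + b) / 2) ^ s := by
  have h := (Real.concaveOn_rpow hs0 hs1).2 (Set.mem_Ici.2 ha) (Set.mem_Ici.2 hb)
    (half_pos one_pos).le (half_pos one_pos).le (add_halves 1)
  simp only [smul_eq_mul] at h
  ring_nf at h ⊢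
  exact h

lemma sq_rpow_half (p a : ℝ) : (a ^ 2) ^ (p / 2) = |a| ^ p := by
  rw [← sq_abs, ← Real.rpow_natCast_mul (abs_nonneg a)]
  congr 1
  push_cast
  ring

lemma rpow_two_div_of_rpow {q a : ℝ} (hq : 0 < q) (ha : 0 ≤ a) : (a ^ q) ^ (2 / q) = a ^ 2 := by
  rw [← Real.rpow_mul ha, mul_div_cancel₀ _ hq.ne', Real.rpow_ofNat]

lemma abs_add_rpow_add_abs_sub_rpow_le_sq {p : ℝ} (hp0 : 0 ≤ p) (hp2 : p ≤ 2) (a b : ℝ) :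
    |a + b| ^ p + |a - b| ^ p ≤ 2 * (a ^ 2 + b ^ 2) ^ (p / 2) := by
  have h := add_rpow_div_two_le (s := p / 2) (by linarith) (by linarith)
    (sq_nonneg (a + b)) (sq_nonneg (a - b))
  rw [show ((a + b) ^ 2 + (a - b) ^ 2) / 2 = a ^ 2 + b ^ 2 by ring, sq_rpow_half,
    sq_rpow_half] at h
  linarith

lemma sq_le_abs_add_rpow_add_abs_sub_rpow {p : ℝ} (hp : 2 ≤ p) (a b : ℝ) :
    2 * (a ^ 2 + b ^ 2) ^ (p / 2) ≤ |a + b| ^ p + |a - b| ^ p := by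
  have h := rpow_add_div_two_le (s := p / 2) (by linarith) (sq_nonneg (a + b))
    (sq_nonneg (a - b))
  rw [show ((a + b) ^ 2 + (a - b) ^ 2) / 2 = a ^ 2 + b ^ 2 by ring, sq_rpow_half,
    sq_rpow_half] at h
  linarith

lemma abs_add_rpow_add_abs_sub_rpow_le_rpow {p : ℝ} (hp0 : 0 ≤ p) (hp2 : p ≤ 2) (a b : ℝ) :
    |a + b| ^ p + |a - b| ^ p ≤ 2 * (|a| ^ p + |b| ^ p) := by
  have h := Real.rpow_add_le_add_rpow (sq_nonneg a) (sq_nonneg b)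
    (by linarith : 0 ≤ p / 2) (by linarith)
  rw [sq_rpow_half, sq_rpow_half] at h
  linarith [abs_add_rpow_add_abs_sub_rpow_le_sq hp0 hp2 a b]

lemma rpow_le_abs_add_rpow_add_abs_sub_rpow {p : ℝ} (hp : 2 ≤ p) (a b : ℝ) :
    2 * (|a| ^ p + |b| ^ p) ≤ |a + b| ^ p + |a - b| ^ p := by
  have h := Real.add_rpow_le_rpow_add (sq_nonneg a) (sq_nonneg b) (by linarith : 1 ≤ p / 2)
  rw [sq_rpow_half, sq_rpow_half] at h
  linarith [sq_le_abs_add_rpow_add_abs_sub_rpow hp a b]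

-- Since `(a ± b) ^ 2 = A ± B` with `A = a ^ 2 + b ^ 2` and `B = 2 * a * b`, the inequality for
-- `q` at `(A, B)` gives the one for `2 * q` at `(a, b)`.
lemma abs_add_rpow_add_abs_sub_rpow_le_of_half {q L : ℝ} (hq : 0 ≤ q) (hL : 0 ≤ L)
    (h : ∀ a b : ℝ, |a + b| ^ q + |a - b| ^ q ≤ 2 * (a ^ 2 + L * b ^ 2) ^ (q / 2)) (a b : ℝ) :
    |a + b| ^ (2 * q) + |a - b| ^ (2 * q) ≤ 2 * (a ^ 2 + (1 + 2 * L) * b ^ 2) ^ q := by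
  have abs_rpow_two_mul (x : ℝ) : |x| ^ (2 * q) = |x ^ 2| ^ q := by
    rw [abs_pow, ← Real.rpow_natCast_mul (abs_nonneg x), Nat.cast_ofNat]
  calc |a + b| ^ (2 * q) + |a - b| ^ (2 * q)
      = |(a ^ 2 + b ^ 2) + 2 * a * b| ^ q + |(a ^ 2 + b ^ 2) - 2 * a * b| ^ q := by
        rw [abs_rpow_two_mul, abs_rpow_two_mul]
        ring_nf
    _ ≤ 2 * ((a ^ 2 + b ^ 2) ^ 2 + L * (2 * a * b) ^ 2) ^ (q / 2) := h _ _
    _ ≤ 2 * ((a ^ 2 + (1 + 2 * L) * b ^ 2) ^ 2) ^ (q / 2) := by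
        gcongr
        have hLb : 0 ≤ L * b ^ 4 := by positivity
        nlinarith [mul_nonneg hL hLb]
    _ = 2 * (a ^ 2 + (1 + 2 * L) * b ^ 2) ^ q := by
        rw [sq_rpow_half, abs_of_nonneg (by positivity)]

lemma exists_abs_add_rpow_add_abs_sub_rpow_le {p : ℝ} (hp : 0 ≤ p) :
    ∃ L : ℝ, 0 < L ∧
      ∀ a b : ℝ, |a + b| ^ p + |a - b| ^ p ≤ 2 * (a ^ 2 + L * b ^ 2) ^ (p / 2) := by
  obtain ⟨n, hn⟩ := pow_unbounded_of_one_lt p one_lt_two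
  induction n generalizing p with
  | zero =>
    refine ⟨1, one_pos, fun a b ↦ ?_⟩
    rw [one_mul]
    exact abs_add_rpow_add_abs_sub_rpow_le_sq hp (by linarith) a b
  | succ n ih =>
    obtain ⟨L, hL, h⟩ := ih (p := p / 2) (by linarith) (by rw [pow_succ] at hn; linarith)
    refine ⟨1 + 2 * L, by linarith, fun a b ↦ ?_⟩
    simpa only [mul_div_cancel₀ p two_ne_zero] using
      abs_add_rpow_add_abs_sub_rpow_le_of_half (by linarith) hL.le h a b

lemma two_mul_sq_add_le_of_holderConjugate {p q : ℝ} (hpq : p.HolderConjugate q) (a b c : ℝ) :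
    2 * (a ^ 2 + c * b ^ 2) ≤ (|a + b| ^ p + |a - b| ^ p) ^ (1 / p) *
      (|a + c * b| ^ q + |a - c * b| ^ q) ^ (1 / q) := by
  have h := Real.inner_le_Lp_mul_Lq Finset.univ ![a + b, a - b] ![a + c * b, a - c * b] hpq
  simp only [Fin.sum_univ_two, Matrix.cons_val_zero, Matrix.cons_val_one] at h
  linarith

-- Dual to the upper bound for the conjugate exponent, through Hölder's inequality on two points.
lemma exists_le_abs_add_rpow_add_abs_sub_rpow {p : ℝ} (hp : 1 < p) :
    ∃ c : ℝ, 0 < c ∧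
      ∀ a b : ℝ, 2 * (a ^ 2 + c * b ^ 2) ^ (p / 2) ≤ |a + b| ^ p + |a - b| ^ p := by
  have hpq := Real.HolderConjugate.conjExponent hp
  set q := p.conjExponent
  obtain ⟨L, hL, h⟩ := exists_abs_add_rpow_add_abs_sub_rpow_le hpq.symm.nonneg
  refine ⟨L⁻¹, inv_pos.2 hL, fun a b ↦ ?_⟩
  set N := a ^ 2 + L⁻¹ * b ^ 2 with hN_def
  have hN : 0 ≤ N := by positivity
  have hNL : a ^ 2 + L * (L⁻¹ * b) ^ 2 = N := by
    rw [hN_def]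
    field_simp
  have hdual : |a + L⁻¹ * b| ^ q + |a - L⁻¹ * b| ^ q ≤ 2 * N ^ (q / 2) := hNL ▸ h a (L⁻¹ * b)
  set S := |a + b| ^ p + |a - b| ^ p
  have hS : 0 ≤ S := by positivity
  have hholder : 2 * N ≤ S ^ (1 / p) * (2 * N ^ (q / 2)) ^ (1 / q) :=
    (two_mul_sq_add_le_of_holderConjugate hpq a b L⁻¹).trans
      (by gcongr; exact hpq.symm.one_div_nonneg)
  rcases hN.eq_or_lt with hN0 | hN0
  · rw [← hN0, Real.zero_rpow (by linarith), mul_zero]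
    exact hS
  have hsplit : (2 * N ^ (p / 2)) ^ (1 / p) * (2 * N ^ (q / 2)) ^ (1 / q) = 2 * N := by
    have hroot {r : ℝ} (hr : r ≠ 0) :
        (2 * N ^ (r / 2)) ^ (1 / r) = 2 ^ (1 / r) * N ^ (1 / 2 : ℝ) := by
      rw [Real.mul_rpow zero_le_two (by positivity), ← Real.rpow_mul hN]
      congr 2
      field_simp
    rw [hroot hpq.ne_zero, hroot hpq.symm.ne_zero, mul_mul_mul_comm, ← Real.rpow_add two_pos,
      ← Real.rpow_add hN0, add_halves, one_div, one_div, hpq.inv_add_inv_eq_one, Real.rpow_one,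
      Real.rpow_one]
  rw [← hsplit] at hholder
  exact (Real.rpow_le_rpow_iff (by positivity) hS hpq.one_div_pos).1
    (le_of_mul_le_mul_right hholder (by positivity))

end TwoPointInequalities

section IntegralInequalities

variable {S : Type*} [MeasurableSpace S] {μ : Measure S}

lemma rpow_integral_add_le_integral_rpow_add {u v : S → ℝ} {q : ℝ} (hq : 1 ≤ q)
    (hu : Integrable u μ) (hv : Integrable v μ) (hu0 : 0 ≤ u) (hv0 : 0 ≤ v) :
    ((∫ s, u s ∂μ) ^ q + (∫ s, v s ∂μ) ^ q) ^ (1 / q) ≤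
      ∫ s, (u s ^ q + v s ^ q) ^ (1 / q) ∂μ := by
  have hq' : (ENNReal.ofReal q).toReal = q := ENNReal.toReal_ofReal (by linarith)
  have : Fact (1 ≤ ENNReal.ofReal q) := ⟨by simpa using ENNReal.ofReal_le_ofReal hq⟩
  let w (s : S) : WithLp (ENNReal.ofReal q) (ℝ × ℝ) := WithLp.toLp _ (u s, v s)
  have hw : Integrable w μ := integrable_prodLp_iff.2 ⟨hu, hv⟩
  have h := norm_integral_le_integral_norm (μ := μ) w
  simp only [WithLp.prod_norm_eq_add (hq'.symm ▸ zero_lt_one.trans_le hq), hq',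
    fst_integral_withLp hw, snd_integral_withLp hw] at h
  simpa [w, abs_of_nonneg (hu0 _), abs_of_nonneg (hv0 _),
    abs_of_nonneg (integral_nonneg hu0), abs_of_nonneg (integral_nonneg hv0)] using h

variable {p : ℝ≥0∞}

lemma Lp_norm_rpow_eq_integral (hp0 : p ≠ 0) (hp : p ≠ ∞) (f : Lp ℝ p μ) :
    ‖f‖ ^ p.toReal = ∫ s, |f s| ^ p.toReal ∂μ := by
  rw [Lp.norm_def, toReal_eLpNorm (Lp.aestronglyMeasurable f),
    lpNorm_eq_integral_norm_rpow_toReal hp0 hp (Lp.aestronglyMeasurable f),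
    Real.rpow_inv_rpow (by positivity) (ENNReal.toReal_pos hp0 hp).ne']
  rfl

lemma Lp_integrable_abs_rpow (hp0 : p ≠ 0) (hp : p ≠ ∞) (f : Lp ℝ p μ) :
    Integrable (fun s ↦ |f s| ^ p.toReal) μ :=
  (Lp.memLp f).integrable_norm_rpow hp0 hp

lemma Lp_norm_add_rpow_add_norm_sub_rpow (hp0 : p ≠ 0) (hp : p ≠ ∞) (x y : Lp ℝ p μ) :
    ‖x + y‖ ^ p.toReal + ‖x - y‖ ^ p.toReal =
      ∫ s, (|x s + y s| ^ p.toReal + |x s - y s| ^ p.toReal) ∂μ := by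
  rw [Lp_norm_rpow_eq_integral hp0 hp, Lp_norm_rpow_eq_integral hp0 hp,
    ← integral_add (Lp_integrable_abs_rpow hp0 hp _) (Lp_integrable_abs_rpow hp0 hp _)]
  refine integral_congr_ae ?_
  filter_upwards [Lp.coeFn_add x y, Lp.coeFn_sub x y] with s hadd hsub
  rw [hadd, hsub, Pi.add_apply, Pi.sub_apply]

lemma Lp_integrable_abs_add_rpow_add_abs_sub_rpow (hp0 : p ≠ 0) (hp : p ≠ ∞) (x y : Lp ℝ p μ) :
    Integrable (fun s ↦ |x s + y s| ^ p.toReal + |x s - y s| ^ p.toReal) μ := by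
  refine ((Lp_integrable_abs_rpow hp0 hp (x + y)).add
    (Lp_integrable_abs_rpow hp0 hp (x - y))).congr ?_
  filter_upwards [Lp.coeFn_add x y, Lp.coeFn_sub x y] with s hadd hsub
  rw [Pi.add_apply, hadd, hsub, Pi.add_apply, Pi.sub_apply]

lemma Lp_integrable_sq_add_sq_rpow (hp0 : p ≠ 0) (hp : p ≠ ∞) (x y : Lp ℝ p μ) :
    Integrable (fun s ↦ ((x s) ^ 2 + (y s) ^ 2) ^ (p.toReal / 2)) μ := by
  let w (s : S) : WithLp 2 (ℝ × ℝ) := WithLp.toLp 2 (x s, y s)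
  have hw : MemLp w p μ := memLp_prodLp_iff.2 ⟨Lp.memLp x, Lp.memLp y⟩
  refine (hw.integrable_norm_rpow hp0 hp).congr (Filter.Eventually.of_forall fun s ↦ ?_)
  have hw_sq : ‖w s‖ ^ 2 = (x s) ^ 2 + (y s) ^ 2 := by
    simp [WithLp.prod_norm_sq_eq_of_L2, w]
  dsimp only
  rw [← hw_sq, sq_rpow_half, abs_norm]

lemma Lp_memLp_sq (x : Lp ℝ p μ) : MemLp (fun s ↦ (x s) ^ 2) (p / 2) μ := by
  simpa using (Lp.memLp x).norm_rpow_div 2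

variable [Fact (1 ≤ p)]

lemma rpow_sq_norm_add_sq_norm_le_integral (hp : p ≠ ∞) (hp2 : p.toReal ≤ 2)
    (x y : Lp ℝ p μ) :
    (‖x‖ ^ 2 + ‖y‖ ^ 2) ^ (p.toReal / 2) ≤
      ∫ s, ((x s) ^ 2 + (y s) ^ 2) ^ (p.toReal / 2) ∂μ := by
  have hp0 : p ≠ 0 := (zero_lt_one.trans_le Fact.out).ne'
  have hpos : 0 < p.toReal := ENNReal.toReal_pos hp0 hp
  have h := rpow_integral_add_le_integral_rpow_add (μ := μ) ((one_le_div hpos).2 hp2)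
    (Lp_integrable_abs_rpow hp0 hp x) (Lp_integrable_abs_rpow hp0 hp y)
    (fun s ↦ by positivity) (fun s ↦ by positivity)
  simpa only [← Lp_norm_rpow_eq_integral hp0 hp, rpow_two_div_of_rpow hpos (norm_nonneg _),
    rpow_two_div_of_rpow hpos (abs_nonneg _), one_div_div, sq_abs] using h

lemma Lp_lpNorm_sq (hp : p ≠ ∞) (x : Lp ℝ p μ) :
    lpNorm (fun s ↦ (x s) ^ 2) (p / 2) μ = ‖x‖ ^ 2 := by
  have hp0 : p ≠ 0 := (zero_lt_one.trans_le Fact.out).ne'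
  rw [lpNorm_eq_integral_norm_rpow_toReal (by simp [hp0]) (ENNReal.div_ne_top hp two_ne_zero)
    (Lp_memLp_sq x).1]
  simp only [ENNReal.toReal_div, ENNReal.toReal_ofNat, norm_pow, Real.norm_eq_abs, sq_rpow_half,
    abs_abs, ← Lp_norm_rpow_eq_integral hp0 hp, inv_div,
    rpow_two_div_of_rpow (ENNReal.toReal_pos hp0 hp) (norm_nonneg _)]

lemma integral_le_rpow_sq_norm_add_sq_norm (hp : p ≠ ∞) (hp2 : 2 ≤ p) (x y : Lp ℝ p μ) :
    ∫ s, ((x s) ^ 2 + (y s) ^ 2) ^ (p.toReal / 2) ∂μ ≤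
      (‖x‖ ^ 2 + ‖y‖ ^ 2) ^ (p.toReal / 2) := by
  have hr : 1 ≤ p / 2 := (ENNReal.le_div_iff_mul_le (by simp) (by simp)).2 (by simpa using hp2)
  have hr0 : p / 2 ≠ 0 := (zero_lt_one.trans_le hr).ne'
  have hrtop : p / 2 ≠ ∞ := ENNReal.div_ne_top hp two_ne_zero
  have hrpos : 0 < (p / 2).toReal := ENNReal.toReal_pos hr0 hrtop
  have h := lpNorm_add_le (g := fun s ↦ (y s) ^ 2) (Lp_memLp_sq x) hr
  rw [Lp_lpNorm_sq hp, Lp_lpNorm_sq hp, lpNorm_eq_integral_norm_rpow_toReal hr0 hrtop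
    ((Lp_memLp_sq x).1.add (Lp_memLp_sq y).1),
    Real.rpow_inv_le_iff_of_pos (by positivity) (by positivity) hrpos] at h
  have norm_sq_add_sq (s : S) : ‖(x s) ^ 2 + (y s) ^ 2‖ = (x s) ^ 2 + (y s) ^ 2 :=
    Real.norm_of_nonneg (by positivity)
  simpa only [Pi.add_apply, norm_sq_add_sq, ENNReal.toReal_div, ENNReal.toReal_ofNat] using h

end IntegralInequalities

/-- Uniform convexity of power type `τ` with constant `c`, in its two-point form. -/
def IsUniformlyConvexOfPowerType (X : Type*) [SeminormedAddCommGroup X] (τ c : ℝ) : Prop :=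
  ∀ x y : X, ‖x‖ ^ τ + c * ‖y‖ ^ τ ≤ (‖x + y‖ ^ τ + ‖x - y‖ ^ τ) / 2

/-- Uniform smoothness of power type `θ` with constant `L`, in its two-point form. -/
def IsUniformlySmoothOfPowerType (X : Type*) [SeminormedAddCommGroup X] (θ L : ℝ) : Prop :=
  ∀ x y : X, (‖x + y‖ ^ θ + ‖x - y‖ ^ θ) / 2 ≤ ‖x‖ ^ θ + L * ‖y‖ ^ θ

section LpGeometry

variable {S : Type*} [MeasurableSpace S] {μ : Measure S} {p : ℝ≥0∞}

lemma norm_sqrt_smul_sq {X : Type*} [SeminormedAddCommGroup X] [NormedSpace ℝ X] {c : ℝ}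
    (hc : 0 ≤ c) (y : X) : ‖√c • y‖ ^ 2 = c * ‖y‖ ^ 2 := by
  rw [norm_smul, mul_pow, Real.norm_eq_abs, sq_abs, Real.sq_sqrt hc]

lemma Lp_coeFn_sqrt_smul_sq {c : ℝ} (hc : 0 ≤ c) (y : Lp ℝ p μ) :
    ∀ᵐ s ∂μ, (√c • y) s ^ 2 = c * y s ^ 2 := by
  filter_upwards [Lp.coeFn_smul (√c) y] with s hs
  rw [hs, Pi.smul_apply, smul_eq_mul, mul_pow, Real.sq_sqrt hc]

variable [Fact (1 ≤ p)]

lemma Lp_isUniformlySmooth_toReal (hp : p.toReal ≤ 2) (hp' : p ≠ ∞) :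
    IsUniformlySmoothOfPowerType (Lp ℝ p μ) p.toReal 1 := fun x y ↦ by
  have hp0 : p ≠ 0 := (zero_lt_one.trans_le Fact.out).ne'
  have hx := Lp_integrable_abs_rpow hp0 hp' x
  have hy := Lp_integrable_abs_rpow hp0 hp' y
  rw [one_mul, div_le_iff₀' two_pos, Lp_norm_add_rpow_add_norm_sub_rpow hp0 hp',
    Lp_norm_rpow_eq_integral hp0 hp' x, Lp_norm_rpow_eq_integral hp0 hp' y,
    ← integral_add hx hy, ← integral_const_mul]
  exact integral_mono (Lp_integrable_abs_add_rpow_add_abs_sub_rpow hp0 hp' x y)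
    ((hx.add hy).const_mul 2)
    fun s ↦ abs_add_rpow_add_abs_sub_rpow_le_rpow ENNReal.toReal_nonneg hp _ _

lemma Lp_isUniformlyConvex_toReal (hp : 2 ≤ p.toReal) (hp' : p ≠ ∞) :
    IsUniformlyConvexOfPowerType (Lp ℝ p μ) p.toReal 1 := fun x y ↦ by
  have hp0 : p ≠ 0 := (zero_lt_one.trans_le Fact.out).ne'
  have hx := Lp_integrable_abs_rpow hp0 hp' x
  have hy := Lp_integrable_abs_rpow hp0 hp' y
  rw [one_mul, le_div_iff₀' two_pos, Lp_norm_add_rpow_add_norm_sub_rpow hp0 hp',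
    Lp_norm_rpow_eq_integral hp0 hp' x, Lp_norm_rpow_eq_integral hp0 hp' y,
    ← integral_add hx hy, ← integral_const_mul]
  exact integral_mono ((hx.add hy).const_mul 2)
    (Lp_integrable_abs_add_rpow_add_abs_sub_rpow hp0 hp' x y)
    fun s ↦ rpow_le_abs_add_rpow_add_abs_sub_rpow hp _ _

lemma Lp_rpow_le_norm_add_rpow_add_norm_sub_rpow (hp : p ≠ ∞) (hp2 : p.toReal ≤ 2) {c : ℝ}
    (hc : 0 ≤ c)
    (h : ∀ a b : ℝ, 2 * (a ^ 2 + c * b ^ 2) ^ (p.toReal / 2) ≤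
      |a + b| ^ p.toReal + |a - b| ^ p.toReal) (x y : Lp ℝ p μ) :
    2 * (‖x‖ ^ 2 + c * ‖y‖ ^ 2) ^ (p.toReal / 2) ≤
      ‖x + y‖ ^ p.toReal + ‖x - y‖ ^ p.toReal := by
  have hp0 : p ≠ 0 := (zero_lt_one.trans_le Fact.out).ne'
  calc 2 * (‖x‖ ^ 2 + c * ‖y‖ ^ 2) ^ (p.toReal / 2)
      ≤ ∫ s, 2 * ((x s) ^ 2 + ((√c • y) s) ^ 2) ^ (p.toReal / 2) ∂μ := by
        rw [integral_const_mul, ← norm_sqrt_smul_sq hc]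
        gcongr
        exact rpow_sq_norm_add_sq_norm_le_integral hp hp2 x (√c • y)
    _ ≤ ∫ s, (|x s + y s| ^ p.toReal + |x s - y s| ^ p.toReal) ∂μ := by
        refine integral_mono_ae ((Lp_integrable_sq_add_sq_rpow hp0 hp x _).const_mul 2)
          (Lp_integrable_abs_add_rpow_add_abs_sub_rpow hp0 hp x y) ?_
        filter_upwards [Lp_coeFn_sqrt_smul_sq hc y] with s hs
        rw [hs]
        exact h _ _
    _ = ‖x + y‖ ^ p.toReal + ‖x - y‖ ^ p.toReal :=
        (Lp_norm_add_rpow_add_norm_sub_rpow hp0 hp x y).symm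

lemma Lp_norm_add_rpow_add_norm_sub_rpow_le (hp : p ≠ ∞) (hp2 : 2 ≤ p) {L : ℝ} (hL : 0 ≤ L)
    (h : ∀ a b : ℝ, |a + b| ^ p.toReal + |a - b| ^ p.toReal ≤
      2 * (a ^ 2 + L * b ^ 2) ^ (p.toReal / 2)) (x y : Lp ℝ p μ) :
    ‖x + y‖ ^ p.toReal + ‖x - y‖ ^ p.toReal ≤
      2 * (‖x‖ ^ 2 + L * ‖y‖ ^ 2) ^ (p.toReal / 2) := by
  have hp0 : p ≠ 0 := (zero_lt_one.trans_le Fact.out).ne'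
  calc ‖x + y‖ ^ p.toReal + ‖x - y‖ ^ p.toReal
      = ∫ s, (|x s + y s| ^ p.toReal + |x s - y s| ^ p.toReal) ∂μ :=
        Lp_norm_add_rpow_add_norm_sub_rpow hp0 hp x y
    _ ≤ ∫ s, 2 * ((x s) ^ 2 + ((√L • y) s) ^ 2) ^ (p.toReal / 2) ∂μ := by
        refine integral_mono_ae (Lp_integrable_abs_add_rpow_add_abs_sub_rpow hp0 hp x y)
          ((Lp_integrable_sq_add_sq_rpow hp0 hp x _).const_mul 2) ?_
        filter_upwards [Lp_coeFn_sqrt_smul_sq hL y] with s hs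
        rw [hs]
        exact h _ _
    _ ≤ 2 * (‖x‖ ^ 2 + L * ‖y‖ ^ 2) ^ (p.toReal / 2) := by
        rw [integral_const_mul, ← norm_sqrt_smul_sq hL]
        gcongr
        exact integral_le_rpow_sq_norm_add_sq_norm hp hp2 x (√L • y)

lemma exists_Lp_isUniformlyConvex_two (hp : 1 < p.toReal) (hp2 : p.toReal ≤ 2) (hp' : p ≠ ∞) :
    ∃ c, 0 < c ∧ IsUniformlyConvexOfPowerType (Lp ℝ p μ) 2 c := by
  obtain ⟨c, hc, h⟩ := exists_le_abs_add_rpow_add_abs_sub_rpow hp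
  refine ⟨c, hc, fun x y ↦ ?_⟩
  have hconcave := add_rpow_div_two_le (s := p.toReal / 2) (by linarith) (by linarith)
    (sq_nonneg ‖x + y‖) (sq_nonneg ‖x - y‖)
  rw [sq_rpow_half, sq_rpow_half, abs_norm, abs_norm] at hconcave
  have hLp := Lp_rpow_le_norm_add_rpow_add_norm_sub_rpow hp' hp2 hc.le h x y
  simp only [Real.rpow_two]
  exact (Real.rpow_le_rpow_iff (by positivity) (by positivity)
    (by linarith : 0 < p.toReal / 2)).1 (by linarith)

lemma exists_Lp_isUniformlySmooth_two (hp : 2 ≤ p) (hp' : p ≠ ∞) :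
    ∃ L, 0 < L ∧ IsUniformlySmoothOfPowerType (Lp ℝ p μ) 2 L := by
  have hp2 : 2 ≤ p.toReal := by simpa using ENNReal.toReal_mono hp' hp
  obtain ⟨L, hL, h⟩ := exists_abs_add_rpow_add_abs_sub_rpow_le (zero_le_two.trans hp2)
  refine ⟨L, hL, fun x y ↦ ?_⟩
  have hconvex := rpow_add_div_two_le (s := p.toReal / 2) (by linarith)
    (sq_nonneg ‖x + y‖) (sq_nonneg ‖x - y‖)
  rw [sq_rpow_half, sq_rpow_half, abs_norm, abs_norm] at hconvex
  have hLp := Lp_norm_add_rpow_add_norm_sub_rpow_le hp' hp hL.le h x y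
  simp only [Real.rpow_two]
  exact (Real.rpow_le_rpow_iff (by positivity) (by positivity)
    (by linarith : 0 < p.toReal / 2)).1 (by linarith)

theorem exists_Lp_isUniformlyConvex (hp : 1 < p.toReal) (hp' : p ≠ ∞) :
    ∃ c, 0 < c ∧ IsUniformlyConvexOfPowerType (Lp ℝ p μ) (max 2 p.toReal) c := by
  rcases le_total p.toReal 2 with hp2 | hp2
  · rw [max_eq_left hp2]
    exact exists_Lp_isUniformlyConvex_two hp hp2 hp'
  · rw [max_eq_right hp2]
    exact ⟨1, one_pos, Lp_isUniformlyConvex_toReal hp2 hp'⟩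

theorem exists_Lp_isUniformlySmooth (hp : p ≠ ∞) :
    ∃ L, 0 < L ∧ IsUniformlySmoothOfPowerType (Lp ℝ p μ) (min 2 p.toReal) L := by
  rcases le_total p 2 with hp2 | hp2
  · have hp2' : p.toReal ≤ 2 := by simpa using ENNReal.toReal_mono (by simp) hp2
    rw [min_eq_right hp2']
    exact ⟨1, one_pos, Lp_isUniformlySmooth_toReal hp2' hp⟩
  · rw [min_eq_left (by simpa using ENNReal.toReal_mono hp hp2)]
    exact exists_Lp_isUniformlySmooth_two hp2 hp

end LpGeometry

section BestApproximation

variable {X : Type*} [NormedAddCommGroup X]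

/-- `x` is a best approximant of `f` from `G`, also called a metric projection. -/
structure IsBestApprox (G : Set X) (f x : X) : Prop where
  mem : x ∈ G
  norm_sub_le : ∀ u ∈ G, ‖f - x‖ ≤ ‖f - u‖

/-- A set is proximinal if every point of the space has a best approximant from it. -/
def IsProximinal (G : Set X) : Prop :=
  ∀ f, ∃ x, IsBestApprox G f x

lemma IsProximinal.isClosed {G : Set X} (hG : IsProximinal G) : IsClosed G := by
  refine isClosed_of_closure_subset fun f hf ↦ ?_
  obtain ⟨x, hx⟩ := hG f
  suffices ‖f - x‖ ≤ 0 by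
    rw [sub_eq_zero.1 (norm_le_zero_iff.1 this)]
    exact hx.mem
  refine le_of_forall_pos_lt_add fun ε hε ↦ ?_
  obtain ⟨u, hu, hfu⟩ := Metric.mem_closure_iff.1 hf ε hε
  rw [zero_add]
  exact (hx.norm_sub_le u hu).trans_lt (dist_eq_norm f u ▸ hfu)

lemma IsBestApprox.norm_sub_le_two_mul {G : Set X} {f x u : X} (hx : IsBestApprox G f x)
    (hu : u ∈ G) : ‖x - u‖ ≤ 2 * ‖f - u‖ := by
  calc ‖x - u‖ = ‖(f - u) - (f - x)‖ := by rw [sub_sub_sub_cancel_left]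
    _ ≤ ‖f - u‖ + ‖f - x‖ := _root_.norm_sub_le _ _
    _ ≤ 2 * ‖f - u‖ := by linarith [hx.norm_sub_le u hu]

variable [NormedSpace ℝ X]

lemma IsBestApprox.inv_smul_preimage {G : Set X} {y x : X} {t : ℝ} (ht : t ≠ 0)
    (hx : IsBestApprox G (t • y) x) : IsBestApprox ((t • ·) ⁻¹' G) y (t⁻¹ • x) where
  mem := by simpa only [Set.mem_preimage, smul_inv_smul₀ ht] using hx.mem
  norm_sub_le u hu := by
    have h := hx.norm_sub_le (t • u) hu
    rw [← smul_inv_smul₀ ht x, ← smul_sub, ← smul_sub, norm_smul, norm_smul] at h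
    exact le_of_mul_le_mul_left h (norm_pos_iff.2 ht)

lemma norm_half_smul_add_rpow_le {s : ℝ} (hs : 1 ≤ s) (x y : X) :
    ‖(1 / 2 : ℝ) • (x + y)‖ ^ s ≤ (‖x‖ ^ s + ‖y‖ ^ s) / 2 := by
  refine le_trans ?_ (rpow_add_div_two_le hs (norm_nonneg x) (norm_nonneg y))
  rw [norm_smul, Real.norm_of_nonneg one_half_pos.le, one_div_mul_eq_div]
  gcongr
  exact norm_add_le x y

-- Uniform convexity is applied at the midpoint of `x` and `g`, which lies in `G`.
lemma IsBestApprox.rpow_norm_sub_add_le {τ c : ℝ} (hτ : 0 ≤ τ)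
    (hX : IsUniformlyConvexOfPowerType X τ c) {G : Set X} (hG : Convex ℝ G) {f x g : X}
    (hx : IsBestApprox G f x) (hg : g ∈ G) :
    ‖f - x‖ ^ τ + 2 * c * (1 / 2) ^ τ * ‖x - g‖ ^ τ ≤ ‖f - g‖ ^ τ := by
  set u := (1 / 2 : ℝ) • x + (1 / 2 : ℝ) • g with hu_def
  have hu : u ∈ G := hG hx.mem hg one_half_pos.le one_half_pos.le (add_halves 1)
  have hfu : ‖f - x‖ ^ τ ≤ ‖f - u‖ ^ τ :=
    Real.rpow_le_rpow (norm_nonneg _) (hx.norm_sub_le u hu) hτ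
  have hconvex := hX (f - u) ((1 / 2 : ℝ) • (x - g))
  rw [show f - u + (1 / 2 : ℝ) • (x - g) = f - g by rw [hu_def]; module,
    show f - u - (1 / 2 : ℝ) • (x - g) = f - x by rw [hu_def]; module, norm_smul,
    Real.norm_of_nonneg one_half_pos.le,
    Real.mul_rpow one_half_pos.le (norm_nonneg _)] at hconvex
  linarith

lemma cauchySeq_of_isBestApprox {τ c : ℝ} (hτ : 0 < τ) (hc : 0 < c)
    (hX : IsUniformlyConvexOfPowerType X τ c) {C : ℕ → Set X} (hC : Antitone C)
    (hconv : ∀ m, Convex ℝ (C m)) {y : X} {x : ℕ → X} (hx : ∀ m, IsBestApprox (C m) y (x m))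
    {r : ℝ} (hr : ∀ m, ‖y - x m‖ ≤ r) : CauchySeq x := by
  have hdist_mono : Monotone fun m ↦ ‖y - x m‖ ^ τ := fun m n hmn ↦
    Real.rpow_le_rpow (norm_nonneg _) ((hx m).norm_sub_le _ (hC hmn (hx n).mem)) hτ.le
  have hdist_bdd : BddAbove (Set.range fun m ↦ ‖y - x m‖ ^ τ) :=
    ⟨r ^ τ, Set.forall_mem_range.2 fun m ↦ Real.rpow_le_rpow (norm_nonneg _) (hr m) hτ.le⟩
  have hdist_cauchy := (tendsto_atTop_ciSup hdist_mono hdist_bdd).cauchySeq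
  refine Metric.cauchySeq_iff'.2 fun ε hε ↦ ?_
  obtain ⟨N, hN⟩ := Metric.cauchySeq_iff'.1 hdist_cauchy (2 * c * (1 / 2) ^ τ * ε ^ τ)
    (by positivity)
  refine ⟨N, fun n hn ↦ ?_⟩
  have hpyth := (hx N).rpow_norm_sub_add_le hτ.le hX (hconv N) (hC hn (hx n).mem)
  have hclose := (abs_lt.1 (hN n hn)).2
  rw [dist_comm, dist_eq_norm]
  refine (Real.rpow_lt_rpow_iff (norm_nonneg _) hε.le hτ).1 ?_
  exact lt_of_mul_lt_mul_left (by linarith : 2 * c * (1 / 2) ^ τ * ‖x N - x n‖ ^ τ < _)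
    (by positivity)

lemma exists_mem_iInter_norm_sub_le [CompleteSpace X] {τ c : ℝ} (hτ : 0 < τ) (hc : 0 < c)
    (hX : IsUniformlyConvexOfPowerType X τ c) {C : ℕ → Set X} (hC : Antitone C)
    (hconv : ∀ m, Convex ℝ (C m)) (hclosed : ∀ m, IsClosed (C m)) {y : X} {x : ℕ → X}
    (hx : ∀ m, IsBestApprox (C m) y (x m)) {r : ℝ} (hr : ∀ m, ‖y - x m‖ ≤ r) :
    ∃ z ∈ ⋂ m, C m, ‖y - z‖ ≤ r := by
  obtain ⟨z, hz⟩ := cauchySeq_tendsto_of_complete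
    (cauchySeq_of_isBestApprox hτ hc hX hC hconv hx hr)
  refine ⟨z, Set.mem_iInter.2 fun m ↦ (hclosed m).mem_of_tendsto hz ?_,
    le_of_tendsto' (hz.const_sub y).norm hr⟩
  filter_upwards [Filter.eventually_ge_atTop m] with n hn
  exact hC hn (hx n).mem

end BestApproximation

section LinealitySpace

open Filter Topology

variable {X : Type*} [NormedAddCommGroup X] [NormedSpace ℝ X] {G : Set X}

/-- The lineality space of a convex set `G` containing `0`: the largest subspace contained in
`G`. -/
def linealitySpace (G : Set X) (h0 : (0 : X) ∈ G) (hG : Convex ℝ G) : Submodule ℝ X where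
  carrier := {v | ∀ t : ℝ, t • v ∈ G}
  zero_mem' t := by rwa [smul_zero]
  add_mem' {u v} hu hv t := by
    convert hG (hu (2 * t)) (hv (2 * t)) one_half_pos.le one_half_pos.le (add_halves 1) using 1
    module
  smul_mem' s v hv t := by
    rw [smul_smul]
    exact hv (t * s)

lemma linealitySpace_subset (h0 : (0 : X) ∈ G) (hG : Convex ℝ G) :
    (linealitySpace G h0 hG : Set X) ⊆ G := fun v hv ↦ by
  simpa only [one_smul] using hv 1

lemma linealitySpace_mono {G' : Set X} (h : G ⊆ G') (h0 : (0 : X) ∈ G) (hG : Convex ℝ G)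
    (hG' : Convex ℝ G') : linealitySpace G h0 hG ≤ linealitySpace G' (h h0) hG' :=
  fun _ hv t ↦ h (hv t)

lemma add_mem_of_mem_linealitySpace (h0 : (0 : X) ∈ G) (hG : Convex ℝ G) (hclosed : IsClosed G)
    {x v : X} (hx : x ∈ G) (hv : v ∈ linealitySpace G h0 hG) : x + v ∈ G := by
  have hlim : Tendsto (fun s : ℝ ↦ (1 - s) • x + v) (𝓝[>] 0) (𝓝 (x + v)) := by
    have hcont : Continuous fun s : ℝ ↦ (1 - s) • x + v := by fun_prop
    simpa only [sub_zero, one_smul] using (hcont.tendsto 0).mono_left nhdsWithin_le_nhds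
  refine hclosed.mem_of_tendsto hlim ?_
  filter_upwards [Ioo_mem_nhdsGT one_pos] with s hs
  have hmem := hG hx (hv s⁻¹) (sub_nonneg.2 hs.2.le) hs.1.le (sub_add_cancel 1 s)
  rwa [smul_inv_smul₀ hs.1.ne'] at hmem

lemma mem_linealitySpace_of_forall_nat (h0 : (0 : X) ∈ G) (hG : Convex ℝ G)
    (hneg : ∀ g ∈ G, -g ∈ G) {v : X} (hv : ∀ m : ℕ, ((m : ℝ) + 1) • v ∈ G) :
    v ∈ linealitySpace G h0 hG := by
  have hpos {t : ℝ} (ht : 0 ≤ t) : t • v ∈ G := by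
    obtain ⟨m, hm⟩ := exists_nat_ge t
    have hm' : (0 : ℝ) < m + 1 := by positivity
    have hmem := hG.smul_mem_of_zero_mem h0 (hv m)
      (t := t / (m + 1)) ⟨by positivity, (div_le_one hm').2 (by linarith)⟩
    rwa [smul_smul, div_mul_cancel₀ _ hm'.ne'] at hmem
  intro t
  rcases le_total 0 t with ht | ht
  · exact hpos ht
  · simpa only [neg_smul, neg_neg] using hneg _ (hpos (neg_nonneg.2 ht))

-- The best approximants of `y` from the shrinking dilates `(m + 1)⁻¹ • G` all lie within `r` of
-- `y`, so they converge to a point of the intersection of these dilates.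
theorem exists_mem_linealitySpace_norm_sub_le [CompleteSpace X] {τ c : ℝ} (hτ : 0 < τ)
    (hc : 0 < c) (hX : IsUniformlyConvexOfPowerType X τ c) (h0 : (0 : X) ∈ G)
    (hG : Convex ℝ G) (hneg : ∀ g ∈ G, -g ∈ G) (hprox : IsProximinal G) {y : X} {r : ℝ}
    (hr : ∀ t : ℝ, 0 < t → ∃ g ∈ G, ‖t • y - g‖ ≤ t * r) :
    ∃ z ∈ linealitySpace G h0 hG, ‖y - z‖ ≤ r := by
  have hpos (m : ℕ) : (0 : ℝ) < m + 1 := by positivity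
  let C (m : ℕ) : Set X := (((m : ℝ) + 1) • ·) ⁻¹' G
  have hC : Antitone C := antitone_nat_of_succ_le fun m z hz ↦ by
    have hmem := hG.smul_mem_of_zero_mem h0 (Set.mem_preimage.1 hz)
      (t := ((m : ℝ) + 1) / ((m + 1 : ℕ) + 1)) ⟨by positivity, ?_⟩
    · rwa [smul_smul, div_mul_cancel₀ _ (hpos (m + 1)).ne'] at hmem
    · rw [div_le_one (hpos (m + 1))]
      push_cast
      linarith
  have hC_conv (m : ℕ) : Convex ℝ (C m) := hG.smul_preimage _
  have hC_closed (m : ℕ) : IsClosed (C m) := hprox.isClosed.preimage (continuous_const_smul _)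
  choose x hx using fun m : ℕ ↦ hprox (((m : ℝ) + 1) • y)
  have hx_le (m : ℕ) : ‖y - ((m : ℝ) + 1)⁻¹ • x m‖ ≤ r := by
    obtain ⟨g, hg, hgr⟩ := hr _ (hpos m)
    have h := ((hx m).norm_sub_le g hg).trans hgr
    rw [← smul_inv_smul₀ (hpos m).ne' (x m), ← smul_sub, norm_smul,
      Real.norm_of_nonneg (hpos m).le] at h
    exact le_of_mul_le_mul_left h (hpos m)
  obtain ⟨z, hz, hzr⟩ := exists_mem_iInter_norm_sub_le hτ hc hX hC hC_conv hC_closed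
    (fun m ↦ (hx m).inv_smul_preimage (hpos m).ne') hx_le
  exact ⟨z, mem_linealitySpace_of_forall_nat h0 hG hneg (Set.mem_iInter.1 hz), hzr⟩

-- The point `x + (w - g) / 2` of `G` is the midpoint of `w` and the reflection `2 • x - g` of `g`.
lemma IsBestApprox.rpow_norm_sub_le_of_mem_linealitySpace {θ L : ℝ} (hθ : 1 ≤ θ)
    (hX : IsUniformlySmoothOfPowerType X θ L) (h0 : (0 : X) ∈ G) (hG : Convex ℝ G)
    (hclosed : IsClosed G) {f x g w : X} (hx : IsBestApprox G f x)
    (hg : g ∈ linealitySpace G h0 hG) (hw : w ∈ linealitySpace G h0 hG) :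
    ‖f - g‖ ^ θ ≤ ‖f - w‖ ^ θ + 2 * L * ‖x - g‖ ^ θ := by
  set u := x + (1 / 2 : ℝ) • (w - g) with hu_def
  have hu : u ∈ G := add_mem_of_mem_linealitySpace h0 hG hclosed hx.mem
    (Submodule.smul_mem _ _ (Submodule.sub_mem _ hw hg))
  have hmid : ‖f - x‖ ^ θ ≤ (‖f - w‖ ^ θ + ‖f - x - (x - g)‖ ^ θ) / 2 :=
    calc ‖f - x‖ ^ θ ≤ ‖f - u‖ ^ θ :=
          Real.rpow_le_rpow (norm_nonneg _) (hx.norm_sub_le u hu) (by linarith)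
      _ = ‖(1 / 2 : ℝ) • (f - w + (f - x - (x - g)))‖ ^ θ := by
          rw [hu_def]
          congr 2
          module
      _ ≤ (‖f - w‖ ^ θ + ‖f - x - (x - g)‖ ^ θ) / 2 := norm_half_smul_add_rpow_le hθ _ _
  have hsmooth := hX (f - x) (x - g)
  rw [sub_add_sub_cancel] at hsmooth
  linarith

end LinealitySpace

section NestedSets

open Filter Topology

variable {X : Type*} [NormedAddCommGroup X] {A : ℕ → Set X} {f : X} {x : ℕ → X}

lemma tendsto_norm_sub_of_isBestApprox (hA : Monotone A) (hdense : Dense (⋃ k, A k))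
    (hx : ∀ k, IsBestApprox (A k) f (x k)) : Tendsto (fun k ↦ ‖f - x k‖) atTop (𝓝 0) := by
  refine Metric.tendsto_atTop.2 fun ε hε ↦ ?_
  obtain ⟨y, hfy, hy⟩ := Metric.dense_iff.1 hdense f ε hε
  obtain ⟨m, hm⟩ := Set.mem_iUnion.1 hy
  refine ⟨m, fun k hk ↦ ?_⟩
  rw [dist_zero_right, norm_norm]
  refine ((hx k).norm_sub_le y (hA hk hm)).trans_lt ?_
  rwa [← dist_eq_norm, dist_comm]

variable [NormedSpace ℝ X]

lemma mul_sum_norm_sub_rpow_le {τ c : ℝ} (hτ : 0 ≤ τ) (hX : IsUniformlyConvexOfPowerType X τ c)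
    (hA : Monotone A) (hconv : ∀ k, Convex ℝ (A k)) (hx : ∀ k, IsBestApprox (A k) f (x k))
    (N : ℕ) :
    2 * c * (1 / 2) ^ τ * ∑ k ∈ Finset.range N, ‖x (k + 1) - x k‖ ^ τ ≤ ‖f - x 0‖ ^ τ := by
  have hpyth (k : ℕ) := (hx (k + 1)).rpow_norm_sub_add_le hτ hX (hconv _)
    (hA k.le_succ (hx k).mem)
  calc 2 * c * (1 / 2) ^ τ * ∑ k ∈ Finset.range N, ‖x (k + 1) - x k‖ ^ τ
      ≤ ∑ k ∈ Finset.range N, (‖f - x k‖ ^ τ - ‖f - x (k + 1)‖ ^ τ) := by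
        rw [Finset.mul_sum]
        exact Finset.sum_le_sum fun k _ ↦ le_sub_iff_add_le'.2 (hpyth k)
    _ = ‖f - x 0‖ ^ τ - ‖f - x N‖ ^ τ := Finset.sum_range_sub' (fun k ↦ ‖f - x k‖ ^ τ) N
    _ ≤ ‖f - x 0‖ ^ τ := sub_le_self _ (by positivity)

lemma le_tsum_of_le_add {u v : ℕ → ℝ} (hv : Summable v) (hu : Tendsto u atTop (𝓝 0))
    (h : ∀ k, u k ≤ u (k + 1) + v k) : u 0 ≤ ∑' k, v k := by
  have hpartial (N : ℕ) : u 0 ≤ u N + ∑ k ∈ Finset.range N, v k := by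
    have hsum := Finset.sum_le_sum fun k (_ : k ∈ Finset.range N) ↦ sub_le_iff_le_add'.2 (h k)
    rw [Finset.sum_range_sub'] at hsum
    linarith
  simpa only [zero_add] using ge_of_tendsto' (hu.add hv.hasSum.tendsto_sum_nat) hpartial

lemma tendsto_zero_of_summable_rpow {s : ℕ → ℝ} {θ : ℝ} (hθ : 0 < θ) (hs : ∀ k, 0 ≤ s k)
    (h : Summable fun k ↦ s k ^ θ) : Tendsto s atTop (𝓝 0) := by
  have hroot := h.tendsto_atTop_zero.rpow_const (p := θ⁻¹) (Or.inr (inv_nonneg.2 hθ.le))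
  simpa only [Real.rpow_rpow_inv (hs _) hθ.ne', Real.zero_rpow (inv_ne_zero hθ.ne')] using hroot

theorem norm_sub_rpow_le_tsum_of_linealitySpace {θ L : ℝ} (hθ : 1 ≤ θ) (hL : 0 ≤ L)
    (hX : IsUniformlySmoothOfPowerType X θ L) (hA : Monotone A) (h0 : ∀ k, (0 : X) ∈ A k)
    (hconv : ∀ k, Convex ℝ (A k)) (hclosed : ∀ k, IsClosed (A k))
    (hx : ∀ k, IsBestApprox (A k) f (x k)) (hlim : Tendsto (fun k ↦ ‖f - x k‖) atTop (𝓝 0))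
    {ε : ℕ → ℝ} (hε : ∀ k, 0 ≤ ε k) (hsum : Summable fun k ↦ ε k ^ θ)
    (hlin : ∀ k, ∃ z ∈ linealitySpace (A k) (h0 k) (hconv k), ‖x (k + 1) - z‖ ≤ ε k) :
    ‖f - x 0‖ ^ θ ≤ 2 * L * ∑' k, ε k ^ θ := by
  have hθ0 : 0 < θ := one_pos.trans_le hθ
  choose z hz hxz using hlin
  have hstep (k : ℕ) : ‖f - z k‖ ^ θ ≤ ‖f - z (k + 1)‖ ^ θ + 2 * L * ε k ^ θ := by
    refine ((hx (k + 1)).rpow_norm_sub_le_of_mem_linealitySpace hθ hX (h0 _) (hconv _)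
      (hclosed _) (linealitySpace_mono (hA k.le_succ) _ _ _ (hz k)) (hz (k + 1))).trans ?_
    gcongr
    exact hxz k
  have hfz : Tendsto (fun k ↦ ‖f - z k‖) atTop (𝓝 0) := by
    refine squeeze_zero (fun k ↦ norm_nonneg _)
      (fun k ↦ (norm_sub_le_norm_sub_add_norm_sub f (x (k + 1)) (z k)).trans
        (add_le_add le_rfl (hxz k))) ?_
    simpa only [add_zero] using ((tendsto_add_atTop_iff_nat 1).2 hlim).add
      (tendsto_zero_of_summable_rpow hθ0 hε hsum)
  have hfz_rpow : Tendsto (fun k ↦ ‖f - z k‖ ^ θ) atTop (𝓝 0) := by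
    simpa only [Real.zero_rpow hθ0.ne'] using hfz.rpow_const (Or.inr hθ0.le)
  calc ‖f - x 0‖ ^ θ ≤ ‖f - z 0‖ ^ θ := Real.rpow_le_rpow (norm_nonneg _)
        ((hx 0).norm_sub_le _ (linealitySpace_subset _ _ (hz 0))) hθ0.le
    _ ≤ ∑' k, 2 * L * ε k ^ θ := le_tsum_of_le_add (hsum.mul_left _) hfz_rpow hstep
    _ = 2 * L * ∑' k, ε k ^ θ := tsum_mul_left

end NestedSets

section Recursion

lemma mul_add_rpow_le {τ ρ x y : ℝ} (hτ : 1 ≤ τ) (hρ0 : 0 ≤ ρ) (hρ1 : ρ < 1) (hx : 0 ≤ x)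
    (hy : 0 ≤ y) : (ρ * x + y) ^ τ ≤ ρ * x ^ τ + (1 - ρ) * (y / (1 - ρ)) ^ τ := by
  have hρ : 0 < 1 - ρ := sub_pos.2 hρ1
  have h := (convexOn_rpow hτ).2 (Set.mem_Ici.2 hx) (Set.mem_Ici.2 (div_nonneg hy hρ.le)) hρ0
    hρ.le (add_sub_cancel ρ 1)
  simpa only [smul_eq_mul, mul_div_cancel₀ y hρ.ne'] using h

lemma one_sub_mul_sum_succ_le {u v : ℕ → ℝ} {ρ : ℝ} (hρ : 0 ≤ ρ) (hu : ∀ k, 0 ≤ u k)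
    (h : ∀ k, u (k + 1) ≤ ρ * u k + v k) (N : ℕ) :
    (1 - ρ) * ∑ k ∈ Finset.range N, u (k + 1) ≤ ρ * u 0 + ∑ k ∈ Finset.range N, v k := by
  have hsum := Finset.sum_le_sum fun k (_ : k ∈ Finset.range N) ↦ h k
  rw [Finset.sum_add_distrib, ← Finset.mul_sum] at hsum
  have hshift : ∑ k ∈ Finset.range N, u k ≤ ∑ k ∈ Finset.range N, u (k + 1) + u 0 := by
    rw [← Finset.sum_range_succ', Finset.sum_range_succ]
    exact le_add_of_nonneg_right (hu N)
  linarith [mul_le_mul_of_nonneg_left hshift hρ]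

lemma one_sub_mul_sum_succ_rpow_le {τ ρ b : ℝ} (hτ : 1 ≤ τ) (hρ0 : 0 ≤ ρ) (hρ1 : ρ < 1)
    (hb : 0 ≤ b) {u d : ℕ → ℝ} (hu : ∀ k, 0 ≤ u k) (hd : ∀ k, 0 ≤ d k)
    (h : ∀ k, u (k + 1) ≤ ρ * u k + b * d k) (N : ℕ) :
    (1 - ρ) * ∑ k ∈ Finset.range N, u (k + 1) ^ τ ≤
      ρ * u 0 ^ τ + (1 - ρ) * (b / (1 - ρ)) ^ τ * ∑ k ∈ Finset.range N, d k ^ τ := by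
  have hb' : 0 ≤ b / (1 - ρ) := div_nonneg hb (sub_pos.2 hρ1).le
  rw [Finset.mul_sum (Finset.range N) (fun k ↦ d k ^ τ)]
  refine one_sub_mul_sum_succ_le (u := fun k ↦ u k ^ τ) hρ0
    (fun k ↦ Real.rpow_nonneg (hu k) τ) (fun k ↦ ?_) N
  calc u (k + 1) ^ τ ≤ (ρ * u k + b * d k) ^ τ :=
        Real.rpow_le_rpow (hu _) (h k) (by linarith)
    _ ≤ ρ * u k ^ τ + (1 - ρ) * (b * d k / (1 - ρ)) ^ τ :=
        mul_add_rpow_le hτ hρ0 hρ1 (hu k) (mul_nonneg hb (hd k))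
    _ = ρ * u k ^ τ + (1 - ρ) * (b / (1 - ρ)) ^ τ * d k ^ τ := by
        rw [mul_div_right_comm, Real.mul_rpow hb' (hd k), mul_assoc (1 - ρ)]

end Recursion

section PowerSums

lemma tsum_ofReal_rpow_rpow_le {s : ℕ → ℝ} {τ M : ℝ} (hτ : 0 < τ) (hs : ∀ k, 0 ≤ s k)
    (hM : 0 ≤ M) (h : ∀ N, ∑ k ∈ Finset.range N, s k ^ τ ≤ M ^ τ) :
    (∑' k, ENNReal.ofReal (s k ^ τ)) ^ (1 / τ) ≤ ENNReal.ofReal M := by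
  rw [one_div, ENNReal.rpow_inv_le_iff hτ, ENNReal.ofReal_rpow_of_nonneg hM hτ.le]
  refine ENNReal.tsum_le_of_sum_range_le fun N ↦ ?_
  rw [← ENNReal.ofReal_sum_of_nonneg fun k _ ↦ Real.rpow_nonneg (hs k) τ]
  exact ENNReal.ofReal_le_ofReal (h N)

lemma ofReal_le_mul_tsum_rpow {s : ℕ → ℝ} {θ C K : ℝ} (hθ : 0 < θ) (hs : ∀ k, 0 ≤ s k)
    (hC : 0 < C) (h : Summable s → K ≤ C * (∑' k, s k) ^ (1 / θ)) :
    ENNReal.ofReal K ≤ ENNReal.ofReal C * (∑' k, ENNReal.ofReal (s k)) ^ (1 / θ) := by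
  by_cases hsum : Summable s
  · rw [← ENNReal.ofReal_tsum_of_nonneg hs hsum, ENNReal.ofReal_rpow_of_nonneg (tsum_nonneg hs)
      (by positivity), ← ENNReal.ofReal_mul hC.le]
    exact ENNReal.ofReal_le_ofReal (h hsum)
  · have htop : ∑' k, ENNReal.ofReal (s k) = ∞ := by
      by_contra hne
      refine hsum ((ENNReal.summable_toReal hne).congr fun k ↦ ?_)
      rw [ENNReal.toReal_ofReal (hs k)]
    rw [htop, ENNReal.top_rpow_of_pos (by positivity), ENNReal.mul_top (by simpa using hC)]
    exact le_top

end PowerSums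

section ApproximationScale

variable {X : Type*} [NormedAddCommGroup X] {G : ℕ → Set X} {NY : X → ℝ} {α : ℝ} {n : ℕ}
  {f x : X}

lemma IsBestApprox.norm_sub_eq (hx : IsBestApprox (G n) f x) :
    ‖f - x‖ = bestApproxError G n f := by
  refine le_antisymm (le_csInf ⟨_, x, hx.mem, rfl⟩ ?_) (csInf_le ⟨0, ?_⟩ ⟨x, hx.mem, rfl⟩)
  · rintro _ ⟨u, hu, rfl⟩
    exact hx.norm_sub_le u hu
  · rintro _ ⟨u, -, rfl⟩
    exact norm_nonneg _

lemma isBestApprox_of_norm_sub_eq (hx : x ∈ G n) (h : ‖f - x‖ = bestApproxError G n f) :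
    IsBestApprox (G n) f x where
  mem := hx
  norm_sub_le u hu := by
    rw [h]
    refine csInf_le ⟨0, ?_⟩ ⟨u, hu, rfl⟩
    rintro _ ⟨v, -, rfl⟩
    exact norm_nonneg _

lemma le_realization (hG : (G n).Nonempty) {r : ℝ}
    (h : ∀ g ∈ G n, r ≤ ‖f - g‖ + (n : ℝ) ^ (-α) * NY g) : r ≤ realization G NY α n f := by
  obtain ⟨g, hg⟩ := hG
  refine le_csInf ⟨_, g, hg, rfl⟩ ?_
  rintro _ ⟨g, hg, rfl⟩
  exact h g hg

/-- The Bernstein inequality `‖g₁ - g₂‖_Y ≤ c n^α ‖g₁ - g₂‖` on the sets `G n`. -/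
def BernsteinInequality (NY : X → ℝ) (G : ℕ → Set X) (α c : ℝ) : Prop :=
  ∀ n : ℕ, 1 ≤ n → ∀ g₁ ∈ G n, ∀ g₂ ∈ G n, NY (g₁ - g₂) ≤ c * (n : ℝ) ^ α * ‖g₁ - g₂‖

/-- The Jackson inequality `E_n(f) ≤ c n^{-α} ‖f‖_Y` on `Y`. -/
def JacksonInequality (Y : Set X) (NY : X → ℝ) (G : ℕ → Set X) (α c : ℝ) : Prop :=
  ∀ f ∈ Y, ∀ n : ℕ, 1 ≤ n → bestApproxError G n f ≤ c * (n : ℝ) ^ (-α) * NY f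

variable [NormedSpace ℝ X] {Y : Submodule ℝ X}

/-- `NY` is a seminorm on the subspace `Y`; its values outside `Y` play no role. -/
structure IsSeminormOn (Y : Submodule ℝ X) (NY : X → ℝ) : Prop where
  add_le : ∀ g h, g ∈ Y → h ∈ Y → NY (g + h) ≤ NY g + NY h
  smul : ∀ (c : ℝ) (g), g ∈ Y → NY (c • g) = |c| * NY g

lemma IsSeminormOn.nonneg (hNY : IsSeminormOn Y NY) {g : X} (hg : g ∈ Y) : 0 ≤ NY g := by
  have hneg := hNY.smul (-1) g hg
  have hzero := hNY.smul 0 g hg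
  have hadd := hNY.add_le g _ hg (Y.smul_mem (-1) hg)
  rw [neg_one_smul, add_neg_cancel, ← zero_smul ℝ g, hzero, ← neg_one_smul ℝ g, hneg, abs_neg,
    abs_one, abs_zero] at hadd
  linarith

lemma IsSeminormOn.KFunctional_nonneg (hNY : IsSeminormOn Y NY) {t : ℝ} (ht : 0 ≤ t) :
    0 ≤ KFunctional (Y : Set X) NY f t := by
  refine Real.sInf_nonneg ?_
  rintro _ ⟨g, hg, rfl⟩
  exact add_nonneg (norm_nonneg _) (mul_nonneg ht (hNY.nonneg hg))

lemma IsSeminormOn.KFunctional_le (hNY : IsSeminormOn Y NY) {t : ℝ} (ht : 0 ≤ t) {g : X}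
    (hg : g ∈ Y) : KFunctional (Y : Set X) NY f t ≤ ‖f - g‖ + t * NY g := by
  refine csInf_le ⟨0, ?_⟩ ⟨g, hg, rfl⟩
  rintro _ ⟨h, hh, rfl⟩
  exact add_nonneg (norm_nonneg _) (mul_nonneg ht (hNY.nonneg hh))

lemma BernsteinInequality.rpow_neg_mul_le {c : ℝ} (h : BernsteinInequality NY G α c)
    (hNY : IsSeminormOn Y NY) (hGY : G n ⊆ Y) (hn : 1 ≤ n) {g₁ g₂ : X} (hg₁ : g₁ ∈ G n)
    (hg₂ : g₂ ∈ G n) :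
    (n : ℝ) ^ (-α) * NY g₁ ≤ (n : ℝ) ^ (-α) * NY g₂ + c * ‖g₁ - g₂‖ := by
  have hn0 : (0 : ℝ) < n := by exact_mod_cast hn
  have hadd := hNY.add_le g₂ (g₁ - g₂) (hGY hg₂) (Y.sub_mem (hGY hg₁) (hGY hg₂))
  rw [add_sub_cancel] at hadd
  calc (n : ℝ) ^ (-α) * NY g₁ ≤ (n : ℝ) ^ (-α) * (NY g₂ + c * (n : ℝ) ^ α * ‖g₁ - g₂‖) := by
        gcongr
        linarith [h n hn g₁ hg₁ g₂ hg₂]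
    _ = (n : ℝ) ^ (-α) * NY g₂ + c * ‖g₁ - g₂‖ := by
        rw [Real.rpow_neg hn0.le]
        field_simp

lemma IsBestApprox.norm_sub_le_realization (hx : IsBestApprox (G n) f x)
    (hNY : IsSeminormOn Y NY) (hGY : G n ⊆ Y) : ‖f - x‖ ≤ realization G NY α n f :=
  le_realization ⟨x, hx.mem⟩ fun g hg ↦ (hx.norm_sub_le g hg).trans
    (le_add_of_nonneg_right (mul_nonneg (by positivity) (hNY.nonneg (hGY hg))))

lemma IsBestApprox.rpow_neg_mul_le_realization {c : ℝ} (hx : IsBestApprox (G n) f x)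
    (hNY : IsSeminormOn Y NY) (hGY : G n ⊆ Y) (hc : 0 ≤ c) (h : BernsteinInequality NY G α c)
    (hn : 1 ≤ n) : (n : ℝ) ^ (-α) * NY x ≤ (1 + 2 * c) * realization G NY α n f := by
  rw [← div_le_iff₀' (by positivity)]
  refine le_realization ⟨x, hx.mem⟩ fun g hg ↦ (div_le_iff₀' (by positivity)).2 ?_
  have hNYg : 0 ≤ (n : ℝ) ^ (-α) * NY g := mul_nonneg (by positivity) (hNY.nonneg (hGY hg))
  calc (n : ℝ) ^ (-α) * NY x ≤ (n : ℝ) ^ (-α) * NY g + c * ‖x - g‖ :=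
        h.rpow_neg_mul_le hNY hGY hn hx.mem hg
    _ ≤ (n : ℝ) ^ (-α) * NY g + c * (2 * ‖f - g‖) := by
        gcongr
        exact hx.norm_sub_le_two_mul hg
    _ ≤ (1 + 2 * c) * (‖f - g‖ + (n : ℝ) ^ (-α) * NY g) := by
        nlinarith [norm_nonneg (f - g), mul_nonneg hc hNYg]

-- The Jackson inequality is homogeneous in `y`, whereas `G n` need not be a cone: applied to the
-- multiples of `y` it already provides approximants from the lineality space of `G n`.
lemma JacksonInequality.exists_mem_linealitySpace [CompleteSpace X] {τ c c₁ : ℝ} (hτ : 0 < τ)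
    (hc : 0 < c) (hX : IsUniformlyConvexOfPowerType X τ c) (hNY : IsSeminormOn Y NY)
    (h : JacksonInequality (Y : Set X) NY G α c₁) (hn : 1 ≤ n) (h0 : (0 : X) ∈ G n)
    (hG : Convex ℝ (G n)) (hneg : ∀ g ∈ G n, -g ∈ G n) (hprox : IsProximinal (G n)) {y : X}
    (hy : y ∈ Y) :
    ∃ z ∈ linealitySpace (G n) h0 hG, ‖y - z‖ ≤ c₁ * (n : ℝ) ^ (-α) * NY y := by
  refine exists_mem_linealitySpace_norm_sub_le hτ hc hX h0 hG hneg hprox fun t ht ↦ ?_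
  obtain ⟨g, hg⟩ := hprox (t • y)
  refine ⟨g, hg.mem, ?_⟩
  calc ‖t • y - g‖ = bestApproxError G n (t • y) := hg.norm_sub_eq
    _ ≤ c₁ * (n : ℝ) ^ (-α) * NY (t • y) := h _ (Y.smul_mem t hy) n hn
    _ = t * (c₁ * (n : ℝ) ^ (-α) * NY y) := by
        rw [hNY.smul t y hy, abs_of_pos ht]
        ring

end ApproximationScale

section DyadicScale

lemma two_rpow_neg_natCast_mul (α : ℝ) (k : ℕ) :
    (2 : ℝ) ^ (-(k : ℝ) * α) = ((2 : ℝ) ^ (-α)) ^ k := by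
  rw [← Real.rpow_mul_natCast zero_le_two, neg_mul_comm, mul_comm]

lemma natCast_two_pow_rpow (s : ℝ) (k : ℕ) : ((2 ^ k : ℕ) : ℝ) ^ s = ((2 : ℝ) ^ s) ^ k := by
  rw [Nat.cast_pow, Nat.cast_ofNat, Real.rpow_pow_comm zero_le_two]

lemma two_pow_monotone : Monotone fun k : ℕ ↦ 2 ^ k := pow_right_mono₀ one_le_two

lemma dense_iUnion_two_pow {X : Type*} [TopologicalSpace X] {G : ℕ → Set X}
    (hG_mono : Monotone G) (hG_dense : Dense (⋃ n, G (n + 1))) (n : ℕ) :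
    Dense (⋃ k, G (2 ^ (n + k))) := by
  refine hG_dense.mono (Set.iUnion_subset fun m ↦ ?_)
  have hle : m + 1 ≤ 2 ^ (n + m) :=
    (Nat.succ_le_of_lt m.lt_two_pow_self).trans (two_pow_monotone (Nat.le_add_left m n))
  exact (hG_mono hle).trans (Set.subset_iUnion (fun k ↦ G (2 ^ (n + k))) m)

variable {X : Type*} [NormedAddCommGroup X] [NormedSpace ℝ X] {Y : Submodule ℝ X} {NY : X → ℝ}
  {G : ℕ → Set X} {α : ℝ} {P : ℕ → X → X}

lemma BernsteinInequality.two_rpow_neg_pow_succ_mul_le {c : ℝ}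
    (h : BernsteinInequality NY G α c) (hNY : IsSeminormOn Y NY) (hG_mono : Monotone G)
    (hG_sub : ∀ n, G n ⊆ Y) {k : ℕ} {x y : X} (hx : x ∈ G (2 ^ k)) (hy : y ∈ G (2 ^ (k + 1))) :
    ((2 : ℝ) ^ (-α)) ^ (k + 1) * NY y ≤
      (2 : ℝ) ^ (-α) * (((2 : ℝ) ^ (-α)) ^ k * NY x) + c * ‖y - x‖ := by
  have hstep := h.rpow_neg_mul_le hNY (hG_sub _) Nat.one_le_two_pow hy
    (hG_mono (two_pow_monotone k.le_succ) hx)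
  rwa [natCast_two_pow_rpow, pow_succ', mul_assoc _ _ (NY x), ← pow_succ'] at hstep

lemma sum_rpow_bestApprox_le {τ c c₂ : ℝ} (hτ : 1 ≤ τ) (hc : 0 < c)
    (hX : IsUniformlyConvexOfPowerType X τ c) (hNY : IsSeminormOn Y NY) (hG_mono : Monotone G)
    (hG_sub : ∀ n, G n ⊆ Y) (hG_conv : ∀ n, Convex ℝ (G n)) (hα : 0 < α) (hc₂ : 0 ≤ c₂)
    (bernstein : BernsteinInequality NY G α c₂) :
    ∃ D, 0 < D ∧ ∀ (f : X) (x : ℕ → X), (∀ k, IsBestApprox (G (2 ^ k)) f (x k)) → ∀ n N : ℕ,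
      ∑ k ∈ Finset.range N, (((2 : ℝ) ^ (-α)) ^ (n + 1 + k) * NY (x (n + 1 + k))) ^ τ ≤
        D * ((((2 : ℝ) ^ (-α)) ^ n * NY (x n)) ^ τ + ‖f - x n‖ ^ τ) := by
  set ρ := (2 : ℝ) ^ (-α)
  have hρ0 : 0 < ρ := by positivity
  have hρ1 : ρ < 1 := Real.rpow_lt_one_of_one_lt_of_neg one_lt_two (neg_neg_of_pos hα)
  have hρ : 0 < 1 - ρ := sub_pos.2 hρ1
  set E := (1 - ρ) * (c₂ / (1 - ρ)) ^ τ / (2 * c * (1 / 2) ^ τ)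
  have hE : 0 ≤ E := by positivity
  refine ⟨(1 + E) / (1 - ρ), by positivity, fun f x hx n N ↦ ?_⟩
  have hδ (k : ℕ) : 0 ≤ ρ ^ k * NY (x k) :=
    mul_nonneg (by positivity) (hNY.nonneg (hG_sub _ (hx k).mem))
  have hhardy := one_sub_mul_sum_succ_rpow_le hτ hρ0.le hρ1 hc₂
    (u := fun k ↦ ρ ^ (n + k) * NY (x (n + k))) (d := fun k ↦ ‖x (n + k + 1) - x (n + k)‖)
    (fun k ↦ hδ _) (fun k ↦ norm_nonneg _)
    (fun k ↦ bernstein.two_rpow_neg_pow_succ_mul_le hNY hG_mono hG_sub (hx _).mem (hx _).mem) N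
  have hincr := mul_sum_norm_sub_rpow_le (by linarith) hX
    (hG_mono.comp (two_pow_monotone.comp (monotone_id.const_add n))) (fun k ↦ hG_conv _)
    (fun k ↦ hx (n + k)) N
  rw [← le_div_iff₀' (by positivity)] at hincr
  have hu0 : 0 ≤ (ρ ^ n * NY (x n)) ^ τ := Real.rpow_nonneg (hδ n) τ
  have hf : 0 ≤ ‖f - x n‖ ^ τ := by positivity
  simp only [Nat.add_right_comm n 1, div_mul_eq_mul_div]
  rw [le_div_iff₀' hρ]
  calc (1 - ρ) * ∑ k ∈ Finset.range N, (ρ ^ (n + k + 1) * NY (x (n + k + 1))) ^ τ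
      ≤ ρ * (ρ ^ n * NY (x n)) ^ τ + (1 - ρ) * (c₂ / (1 - ρ)) ^ τ *
          ∑ k ∈ Finset.range N, ‖x (n + k + 1) - x (n + k)‖ ^ τ := hhardy
    _ ≤ ρ * (ρ ^ n * NY (x n)) ^ τ + (1 - ρ) * (c₂ / (1 - ρ)) ^ τ *
          (‖f - x n‖ ^ τ / (2 * c * (1 / 2) ^ τ)) := by
        gcongr
        exact hincr
    _ = ρ * (ρ ^ n * NY (x n)) ^ τ + E * ‖f - x n‖ ^ τ := by
        rw [mul_div_assoc', div_mul_eq_mul_div]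
    _ ≤ (1 + E) * ((ρ ^ n * NY (x n)) ^ τ + ‖f - x n‖ ^ τ) := by
        nlinarith [mul_nonneg hE hu0]

theorem tsum_bestApprox_le_KFunctional {τ c c₂ C₀ : ℝ} (hτ : 1 ≤ τ) (hc : 0 < c)
    (hX : IsUniformlyConvexOfPowerType X τ c) (hNY : IsSeminormOn Y NY) (hG_mono : Monotone G)
    (hG_sub : ∀ n, G n ⊆ Y) (hG_conv : ∀ n, Convex ℝ (G n)) (hα : 0 < α) (hc₂ : 0 ≤ c₂)
    (bernstein : BernsteinInequality NY G α c₂) (hC₀ : 0 < C₀)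
    (hreal : ∀ (f : X) (n : ℕ), 1 ≤ n →
      realization G NY α n f ≤ C₀ * KFunctional (Y : Set X) NY f ((n : ℝ) ^ (-α)))
    (hP : ∀ (f : X) (n : ℕ), 1 ≤ n → IsBestApprox (G n) f (P n f)) :
    ∃ C, 0 < C ∧ ∀ (f : X) (n : ℕ),
      (∑' k : ℕ, ENNReal.ofReal (((2 : ℝ) ^ (-((n + 1 + k : ℕ) : ℝ) * α) *
        NY (P (2 ^ (n + 1 + k)) f)) ^ τ)) ^ (1 / τ) ≤
      ENNReal.ofReal (C * KFunctional (Y : Set X) NY f ((2 : ℝ) ^ (-(n : ℝ) * α))) := by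
  have hτ0 : 0 < τ := one_pos.trans_le hτ
  obtain ⟨D, hD, hsum⟩ := sum_rpow_bestApprox_le hτ hc hX hNY hG_mono hG_sub hG_conv hα hc₂
    bernstein
  set M := D * (((1 + 2 * c₂) * C₀) ^ τ + C₀ ^ τ) with hM
  refine ⟨M ^ (1 / τ), by positivity, fun f n ↦ ?_⟩
  have hx (k : ℕ) : IsBestApprox (G (2 ^ k)) f (P (2 ^ k) f) := hP f _ Nat.one_le_two_pow
  have hR := hreal f (2 ^ n) Nat.one_le_two_pow
  have hxR : ‖f - P (2 ^ n) f‖ ≤ realization G NY α (2 ^ n) f :=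
    (hx n).norm_sub_le_realization hNY (hG_sub _)
  have hNYR := (hx n).rpow_neg_mul_le_realization hNY (hG_sub _) hc₂ bernstein Nat.one_le_two_pow
  simp only [two_rpow_neg_natCast_mul, natCast_two_pow_rpow] at hR hNYR ⊢
  set ρ := (2 : ℝ) ^ (-α)
  set K := KFunctional (Y : Set X) NY f (ρ ^ n)
  have hK : 0 ≤ K := hNY.KFunctional_nonneg (by positivity)
  have hδ (k : ℕ) : 0 ≤ ρ ^ k * NY (P (2 ^ k) f) :=
    mul_nonneg (by positivity) (hNY.nonneg (hG_sub _ (hx k).mem))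
  refine tsum_ofReal_rpow_rpow_le hτ0 (fun k ↦ hδ _) (by positivity) fun N ↦ ?_
  calc ∑ k ∈ Finset.range N, (ρ ^ (n + 1 + k) * NY (P (2 ^ (n + 1 + k)) f)) ^ τ
      ≤ D * ((ρ ^ n * NY (P (2 ^ n) f)) ^ τ + ‖f - P (2 ^ n) f‖ ^ τ) :=
        hsum f (fun k ↦ P (2 ^ k) f) hx n N
    _ ≤ D * (((1 + 2 * c₂) * (C₀ * K)) ^ τ + (C₀ * K) ^ τ) := by
        refine mul_le_mul_of_nonneg_left (add_le_add ?_ ?_) hD.le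
        · exact Real.rpow_le_rpow (hδ n) (hNYR.trans (by gcongr)) hτ0.le
        · exact Real.rpow_le_rpow (norm_nonneg _) (hxR.trans hR) hτ0.le
    _ = (M ^ (1 / τ) * K) ^ τ := by
        rw [Real.mul_rpow (x := M ^ (1 / τ)) (by positivity) hK, one_div,
          Real.rpow_inv_rpow (by positivity) hτ0.ne', hM, ← mul_assoc (1 + 2 * c₂),
          Real.mul_rpow (by positivity) hK, Real.mul_rpow hC₀.le hK]
        ring

lemma JacksonInequality.rpow_norm_sub_bestApprox_le [CompleteSpace X] {τ θ c L c₁ : ℝ}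
    (hτ : 0 < τ) (hc : 0 < c) (hconvex : IsUniformlyConvexOfPowerType X τ c) (hθ : 1 ≤ θ)
    (hL : 0 ≤ L) (hsmooth : IsUniformlySmoothOfPowerType X θ L) (hNY : IsSeminormOn Y NY)
    (hG_zero : (0 : X) ∈ G 1) (hG_mono : Monotone G) (hG_neg : ∀ n, ∀ g ∈ G n, -g ∈ G n)
    (hG_sub : ∀ n, G n ⊆ Y) (hG_dense : Dense (⋃ n, G (n + 1)))
    (hG_conv : ∀ n, Convex ℝ (G n)) (hc₁ : 0 ≤ c₁)
    (jackson : JacksonInequality (Y : Set X) NY G α c₁)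
    (hprox : ∀ n, 1 ≤ n → IsProximinal (G n)) {f : X} {x : ℕ → X}
    (hx : ∀ k, IsBestApprox (G (2 ^ k)) f (x k)) (n : ℕ)
    (hsum : Summable fun k ↦ (((2 : ℝ) ^ (-α)) ^ (n + k) * NY (x (n + k))) ^ θ) :
    ‖f - x n‖ ^ θ ≤ 2 * L * (c₁ / 2 ^ (-α)) ^ θ *
      ∑' k, (((2 : ℝ) ^ (-α)) ^ (n + k) * NY (x (n + k))) ^ θ := by
  set ρ := (2 : ℝ) ^ (-α) with hρ
  have hρ0 : 0 < ρ := by positivity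
  have hδ (k : ℕ) : 0 ≤ ρ ^ k * NY (x k) :=
    mul_nonneg (by positivity) (hNY.nonneg (hG_sub _ (hx k).mem))
  have hmono : Monotone fun k ↦ G (2 ^ (n + k)) :=
    hG_mono.comp (two_pow_monotone.comp (monotone_id.const_add n))
  have h0 (k : ℕ) : (0 : X) ∈ G (2 ^ (n + k)) := hG_mono Nat.one_le_two_pow hG_zero
  have hlin (k : ℕ) : ∃ z ∈ linealitySpace (G (2 ^ (n + k))) (h0 k) (hG_conv _),
      ‖x (n + (k + 1)) - z‖ ≤ c₁ / ρ * (ρ ^ (n + (k + 1)) * NY (x (n + (k + 1)))) := by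
    obtain ⟨z, hz, hle⟩ := jackson.exists_mem_linealitySpace hτ hc hconvex hNY
      Nat.one_le_two_pow (h0 k) (hG_conv _) (hG_neg _) (hprox _ Nat.one_le_two_pow)
      (hG_sub _ (hx (n + (k + 1))).mem)
    refine ⟨z, hz, hle.trans_eq ?_⟩
    rw [natCast_two_pow_rpow, ← hρ, ← add_assoc, pow_succ]
    field_simp
  have hε (k : ℕ) : (c₁ / ρ * (ρ ^ (n + (k + 1)) * NY (x (n + (k + 1))))) ^ θ =
      (c₁ / ρ) ^ θ * (ρ ^ (n + (k + 1)) * NY (x (n + (k + 1)))) ^ θ :=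
    Real.mul_rpow (by positivity) (hδ _)
  have hsum' := (summable_nat_add_iff 1).2 hsum
  have hmain := norm_sub_rpow_le_tsum_of_linealitySpace hθ hL hsmooth hmono h0
    (fun k ↦ hG_conv _) (fun k ↦ (hprox _ Nat.one_le_two_pow).isClosed) (fun k ↦ hx (n + k))
    (tendsto_norm_sub_of_isBestApprox hmono (dense_iUnion_two_pow hG_mono hG_dense n)
      fun k ↦ hx (n + k))
    (fun k ↦ mul_nonneg (by positivity) (hδ _)) ((hsum'.mul_left _).congr fun k ↦ (hε k).symm)
    hlin
  simp only [hε, tsum_mul_left, ← mul_assoc (2 * L)] at hmain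
  refine hmain.trans (mul_le_mul_of_nonneg_left ?_ (by positivity))
  rw [hsum.tsum_eq_zero_add]
  exact le_add_of_nonneg_left (Real.rpow_nonneg (hδ _) θ)

theorem KFunctional_le_tsum_bestApprox [CompleteSpace X] {τ θ c L c₁ : ℝ}
    (hτ : 0 < τ) (hc : 0 < c) (hconvex : IsUniformlyConvexOfPowerType X τ c) (hθ : 1 ≤ θ)
    (hL : 0 ≤ L) (hsmooth : IsUniformlySmoothOfPowerType X θ L) (hNY : IsSeminormOn Y NY)
    (hG_zero : (0 : X) ∈ G 1) (hG_mono : Monotone G) (hG_neg : ∀ n, ∀ g ∈ G n, -g ∈ G n)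
    (hG_sub : ∀ n, G n ⊆ Y) (hG_dense : Dense (⋃ n, G (n + 1)))
    (hG_conv : ∀ n, Convex ℝ (G n)) (hc₁ : 0 ≤ c₁)
    (jackson : JacksonInequality (Y : Set X) NY G α c₁)
    (hP : ∀ (f : X) (n : ℕ), 1 ≤ n → IsBestApprox (G n) f (P n f)) :
    ∃ C, 0 < C ∧ ∀ (f : X) (n : ℕ),
      ENNReal.ofReal (KFunctional (Y : Set X) NY f ((2 : ℝ) ^ (-(n : ℝ) * α))) ≤
      ENNReal.ofReal C * (∑' k : ℕ, ENNReal.ofReal (((2 : ℝ) ^ (-((n + 1 + k : ℕ) : ℝ) * α) *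
        NY (P (2 ^ (n + 1 + k)) f)) ^ θ)) ^ (1 / θ) := by
  have hθ0 : 0 < θ := one_pos.trans_le hθ
  simp only [two_rpow_neg_natCast_mul]
  set ρ := (2 : ℝ) ^ (-α)
  have hρ0 : 0 < ρ := by positivity
  set B := 2 * L * (c₁ / ρ) ^ θ
  have hB : 0 ≤ B := by positivity
  refine ⟨B ^ (1 / θ) + ρ⁻¹, by positivity, fun f n ↦ ?_⟩
  have hx (k : ℕ) : IsBestApprox (G (2 ^ k)) f (P (2 ^ k) f) := hP f _ Nat.one_le_two_pow
  have hδ (k : ℕ) : 0 ≤ ρ ^ k * NY (P (2 ^ k) f) :=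
    mul_nonneg (by positivity) (hNY.nonneg (hG_sub _ (hx k).mem))
  have hδθ (k : ℕ) : 0 ≤ (ρ ^ k * NY (P (2 ^ k) f)) ^ θ := Real.rpow_nonneg (hδ k) θ
  refine ofReal_le_mul_tsum_rpow hθ0 (fun k ↦ hδθ _) (by positivity) fun hsum ↦ ?_
  set T := ∑' k, (ρ ^ (n + 1 + k) * NY (P (2 ^ (n + 1 + k)) f)) ^ θ
  have hT : 0 ≤ T := tsum_nonneg fun k ↦ hδθ _
  have hnorm : ‖f - P (2 ^ (n + 1)) f‖ ≤ B ^ (1 / θ) * T ^ (1 / θ) := by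
    rw [← Real.mul_rpow hB hT, one_div, Real.le_rpow_inv_iff_of_pos (norm_nonneg _)
      (by positivity) hθ0]
    exact jackson.rpow_norm_sub_bestApprox_le hτ hc hconvex hθ hL hsmooth hNY hG_zero hG_mono
      hG_neg hG_sub hG_dense hG_conv hc₁ (fun m hm g ↦ ⟨_, hP g m hm⟩) hx (n + 1) hsum
  have hseminorm : ρ ^ (n + 1) * NY (P (2 ^ (n + 1)) f) ≤ T ^ (1 / θ) := by
    rw [one_div, Real.le_rpow_inv_iff_of_pos (hδ _) hT hθ0]
    exact hsum.le_tsum 0 fun k _ ↦ hδθ _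
  calc KFunctional (Y : Set X) NY f (ρ ^ n)
      ≤ ‖f - P (2 ^ (n + 1)) f‖ + ρ ^ n * NY (P (2 ^ (n + 1)) f) :=
        hNY.KFunctional_le (by positivity) (hG_sub _ (hx (n + 1)).mem)
    _ = ‖f - P (2 ^ (n + 1)) f‖ + ρ⁻¹ * (ρ ^ (n + 1) * NY (P (2 ^ (n + 1)) f)) := by
        rw [pow_succ ρ]
        field_simp
    _ ≤ B ^ (1 / θ) * T ^ (1 / θ) + ρ⁻¹ * T ^ (1 / θ) := by gcongr
    _ = (B ^ (1 / θ) + ρ⁻¹) * T ^ (1 / θ) := by ring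

end DyadicScale

theorem stmt8_general {X : Type*} [NormedAddCommGroup X] [NormedSpace ℝ X] [CompleteSpace X]
    {τ c θ L : ℝ} (hτ : 1 ≤ τ) (hc : 0 < c) (hconvex : IsUniformlyConvexOfPowerType X τ c)
    (hθ : 1 ≤ θ) (hL : 0 ≤ L) (hsmooth : IsUniformlySmoothOfPowerType X θ L)
    {Y : Submodule ℝ X} {NY : X → ℝ} (hNY : IsSeminormOn Y NY) {G : ℕ → Set X}
    (hG_zero : (0 : X) ∈ G 1) (hG_mono : Monotone G) (hG_neg : ∀ n, ∀ g ∈ G n, -g ∈ G n)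
    (hG_sub : ∀ n, G n ⊆ Y) (hG_dense : Dense (⋃ n, G (n + 1)))
    (hG_conv : ∀ n, Convex ℝ (G n)) {α c₁ c₂ C₀ : ℝ} (hα : 0 < α) (hc₁ : 0 ≤ c₁)
    (hc₂ : 0 ≤ c₂) (jackson : JacksonInequality (Y : Set X) NY G α c₁)
    (bernstein : BernsteinInequality NY G α c₂) (hC₀ : 0 < C₀)
    (hreal : ∀ (f : X) (n : ℕ), 1 ≤ n →
      realization G NY α n f ≤ C₀ * KFunctional (Y : Set X) NY f ((n : ℝ) ^ (-α)))
    {P : ℕ → X → X} (hP : ∀ (f : X) (n : ℕ), 1 ≤ n → IsBestApprox (G n) f (P n f)) :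
    ∃ C, 0 < C ∧ ∀ (f : X) (n : ℕ),
      (∑' k : ℕ, ENNReal.ofReal (((2 : ℝ) ^ (-((n + 1 + k : ℕ) : ℝ) * α) *
          NY (P (2 ^ (n + 1 + k)) f)) ^ τ)) ^ (1 / τ) ≤
        ENNReal.ofReal (C * KFunctional (Y : Set X) NY f ((2 : ℝ) ^ (-(n : ℝ) * α))) ∧
      ENNReal.ofReal (KFunctional (Y : Set X) NY f ((2 : ℝ) ^ (-(n : ℝ) * α))) ≤
        ENNReal.ofReal C * (∑' k : ℕ, ENNReal.ofReal (((2 : ℝ) ^ (-((n + 1 + k : ℕ) : ℝ) * α) *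
          NY (P (2 ^ (n + 1 + k)) f)) ^ θ)) ^ (1 / θ) := by
  obtain ⟨C₁, hC₁, h₁⟩ := tsum_bestApprox_le_KFunctional hτ hc hconvex hNY hG_mono hG_sub hG_conv
    hα hc₂ bernstein hC₀ hreal hP
  obtain ⟨C₂, -, h₂⟩ := KFunctional_le_tsum_bestApprox (one_pos.trans_le hτ) hc hconvex hθ hL
    hsmooth hNY hG_zero hG_mono hG_neg hG_sub hG_dense hG_conv hc₁ jackson hP
  refine ⟨max C₁ C₂, lt_max_of_lt_left hC₁, fun f n ↦
    ⟨(h₁ f n).trans (ENNReal.ofReal_le_ofReal ?_), (h₂ f n).trans ?_⟩⟩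
  · exact mul_le_mul_of_nonneg_right (le_max_left _ _) (hNY.KFunctional_nonneg (by positivity))
  · gcongr
    exact le_max_right _ _

/-- For `X = L_p(μ)` with `1 < p < ∞`, convex sets `G_n`, and the Jackson,
Bernstein and realization assumptions, the best approximants satisfy, with `τ = max(2,p)` and
`θ = min(2,p)`,
`(∑_{k>n} 2^{-kατ} ‖P_{2^k}(f)‖_Y^τ)^{1/τ} ≲ K(f,2^{-nα};L_p,Y)
  ≲ (∑_{k>n} 2^{-kαθ} ‖P_{2^k}(f)‖_Y^θ)^{1/θ}`. -/
theorem stmt8 {S : Type*} [MeasurableSpace S] (μ : Measure S)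
    (p : ℝ≥0∞) [Fact (1 ≤ p)] (hp1 : 1 < p) (hp2 : p ≠ ∞)
    (Y : Submodule ℝ (Lp ℝ p μ)) (NY : Lp ℝ p μ → ℝ)
    (hNY_nonneg : ∀ g, 0 ≤ NY g)
    (hNY_add : ∀ g h, g ∈ Y → h ∈ Y → NY (g + h) ≤ NY g + NY h)
    (hNY_smul : ∀ (c : ℝ) (g), g ∈ Y → NY (c • g) = |c| * NY g)
    (G : ℕ → Set (Lp ℝ p μ))
    (hG_zero : (0 : Lp ℝ p μ) ∈ G 1)
    (hG_mono : ∀ n : ℕ, G n ⊆ G (n + 1))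
    (hG_neg : ∀ (n : ℕ) (g), g ∈ G n → -g ∈ G n)
    (hG_sub : ∀ n : ℕ, G n ⊆ (Y : Set (Lp ℝ p μ)))
    (hG_dense : Dense (⋃ n : ℕ, G (n + 1)))
    (hG_conv : ∀ n : ℕ, Convex ℝ (G n))
    (α : ℝ) (hα : 0 < α)
    (c₁ c₂ : ℝ) (hc₁ : 0 < c₁) (hc₂ : 0 < c₂)
    (jackson : ∀ f ∈ Y, ∀ n : ℕ, 1 ≤ n →
      bestApproxError G n f ≤ c₁ * (n : ℝ) ^ (-α) * NY f)
    (bernstein : ∀ n : ℕ, 1 ≤ n → ∀ g₁ ∈ G n, ∀ g₂ ∈ G n,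
      NY (g₁ - g₂) ≤ c₂ * (n : ℝ) ^ α * ‖g₁ - g₂‖)
    (C₀ : ℝ) (hC₀ : 0 < C₀)
    (hreal : ∀ (f : Lp ℝ p μ) (n : ℕ), 1 ≤ n →
      realization G NY α n f ≤ C₀ * KFunctional (Y : Set (Lp ℝ p μ)) NY f ((n : ℝ) ^ (-α)))
    (P : ℕ → Lp ℝ p μ → Lp ℝ p μ)
    (hP : ∀ (f : Lp ℝ p μ) (n : ℕ), 1 ≤ n →
      P n f ∈ G n ∧ ‖f - P n f‖ = bestApproxError G n f) :
    ∃ C : ℝ, 0 < C ∧ ∀ (f : Lp ℝ p μ) (n : ℕ), 1 ≤ n →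
      (∑' k : ℕ,
          ENNReal.ofReal
            (((2 : ℝ) ^ (-((n + 1 + k : ℕ) : ℝ) * α) * NY (P (2 ^ (n + 1 + k)) f)) ^
              max 2 p.toReal)) ^ (1 / max 2 p.toReal)
        ≤ ENNReal.ofReal
            (C * KFunctional (Y : Set (Lp ℝ p μ)) NY f ((2 : ℝ) ^ (-(n : ℝ) * α))) ∧
      ENNReal.ofReal (KFunctional (Y : Set (Lp ℝ p μ)) NY f ((2 : ℝ) ^ (-(n : ℝ) * α)))
        ≤ ENNReal.ofReal C *
          (∑' k : ℕ,
            ENNReal.ofReal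
              (((2 : ℝ) ^ (-((n + 1 + k : ℕ) : ℝ) * α) * NY (P (2 ^ (n + 1 + k)) f)) ^
                min 2 p.toReal)) ^ (1 / min 2 p.toReal) := by
  have hp : 1 < p.toReal := by
    rw [← ENNReal.toReal_one]
    exact (ENNReal.toReal_lt_toReal ENNReal.one_ne_top hp2).2 hp1
  obtain ⟨c, hc, hconvex⟩ := exists_Lp_isUniformlyConvex (μ := μ) hp hp2
  obtain ⟨L, hL, hsmooth⟩ := exists_Lp_isUniformlySmooth (μ := μ) hp2
  obtain ⟨C, hC, h⟩ := stmt8_general (one_le_two.trans (le_max_left 2 p.toReal)) hc hconvex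
    (le_min one_le_two hp.le) hL.le hsmooth ⟨hNY_add, hNY_smul⟩ hG_zero
    (monotone_nat_of_le_succ hG_mono) hG_neg hG_sub hG_dense hG_conv hα hc₁.le hc₂.le jackson
    bernstein hC₀ hreal
    fun f n hn ↦ isBestApprox_of_norm_sub_eq (hP f n hn).1 (hP f n hn).2
  exact ⟨C, hC, fun f n _ ↦ h f n⟩
end
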